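/- Let k ≥ 2 be an integer and j ∈ {1,…,k−1}. With high probability, for all p < p_{M_j} simultaneously, the complex G_p is not F_2-cohomologically j-connected, i.e. H^0(G_p;F_2) ≇ F_2 or H^i(G_p;F_2) ≠ 0 for some i ∈ {1,…,j}. -/

import Mathlib

open MeasureTheory Filter

attribute [local instance] Classical.propDecidable

namespace RSC

variable {V : Type*}

/-- `A` is an `i`-dimensional simplex of the complex `G`. -/
def IsSimplex (G : Set (Finset V)) (i : ℕ) (A : Finset V) : Prop :=
  A ∈ G ∧ A.card = i + 1

/-- A `k`-dimensional simplicial complex on vertex set `V`. -/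
structure IsKComplex (G : Set (Finset V)) (k : ℕ) : Prop where
  down : ∀ A ∈ G, ∀ B, B ⊆ A → B.Nonempty → B ∈ G
  singletons : ∀ v : V, ({v} : Finset V) ∈ G
  dim : ∀ A ∈ G, A.card ≤ k + 1

/-- `i`-cochains with `F₂`-coefficients. -/
abbrev Cochain (G : Set (Finset V)) (i : ℕ) : Type _ :=
  {A : Finset V // IsSimplex G i A} → ZMod 2

/-- The coboundary map `δ^i : C^i(G) → C^{i+1}(G)`. -/
noncomputable def coboundary (G : Set (Finset V)) (i : ℕ) :
    Cochain G i →ₗ[ZMod 2] Cochain G (i + 1) where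
  toFun f := fun σ => ∑ τ ∈ Finset.powersetCard (i + 1) (σ : Finset V),
      if h : IsSimplex G i τ then f ⟨τ, h⟩ else 0
  map_add' f g := by
    funext σ
    simp only [Pi.add_apply, ← Finset.sum_add_distrib]
    refine Finset.sum_congr rfl fun τ _ => ?_
    by_cases h : IsSimplex G i τ <;> simp [h]
  map_smul' c f := by
    funext σ
    simp only [Pi.smul_apply, RingHom.id_apply, Finset.smul_sum]
    refine Finset.sum_congr rfl fun τ _ => ?_
    by_cases h : IsSimplex G i τ <;> simp [h]

/-- The submodule of `i`-cocycles. -/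
noncomputable def cocycles (G : Set (Finset V)) (i : ℕ) : Submodule (ZMod 2) (Cochain G i) :=
  LinearMap.ker (coboundary G i)

/-- The submodule of `i`-coboundaries (`δ^{-1}` is the zero map). -/
noncomputable def coboundaries (G : Set (Finset V)) : (i : ℕ) → Submodule (ZMod 2) (Cochain G i)
  | 0 => ⊥
  | (i + 1) => LinearMap.range (coboundary G i)

/-- The `i`-th cohomology group `H^i(G;F₂) = ker δ^i / im δ^{i-1}`. -/
noncomputable abbrev cohomology (G : Set (Finset V)) (i : ℕ) :=
  (cocycles G i) ⧸ ((coboundaries G i).comap (cocycles G i).subtype)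

/-- `F₂`-cohomological `j`-connectedness: `H^0 ≅ F₂` and `H^i = 0` for `1 ≤ i ≤ j`. -/
def CohomConnected (G : Set (Finset V)) (j : ℕ) : Prop :=
  Nonempty (cohomology G 0 ≃ₗ[ZMod 2] ZMod 2) ∧
    ∀ i, 1 ≤ i → i ≤ j → Subsingleton (cohomology G i)

/-- The `j`-flower in `K` with centre `C`: the set of petals `C ∪ {w}`, `w ∈ K \ C`. -/
def Flower [DecidableEq V] (K C : Finset V) : Set (Finset V) :=
  {P | ∃ w ∈ K \ C, P = insert w C}

/-- A copy of `M_j^-`: a `k`-simplex `K` together with a `(j-1)`-simplex `C ⊆ K` such that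
each petal of the flower `F(K,C)` is contained in no `k`-simplex other than `K`. -/
def IsMjMinus [DecidableEq V] (G : Set (Finset V)) (k j : ℕ) (K C : Finset V) : Prop :=
  IsSimplex G k K ∧ C ∈ G ∧ C.card = j ∧ C ⊆ K ∧
    ∀ P ∈ Flower K C, ∀ K', IsSimplex G k K' → P ⊆ K' → K' = K

/-- A `j`-cycle: every `(j-1)`-simplex lies in an even number of members of `J`. -/
def IsCycle (G : Set (Finset V)) (j : ℕ) (J : Finset (Finset V)) : Prop :=
  (∀ σ ∈ J, IsSimplex G j σ) ∧
    ∀ τ : Finset V, τ.card = j → Even (J.filter (fun σ => τ ⊆ σ)).card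

/-- A copy of `M_j`. -/
def IsMj [DecidableEq V] (G : Set (Finset V)) (k j : ℕ) (K C : Finset V)
    (J : Finset (Finset V)) : Prop :=
  IsMjMinus G k j K C ∧ IsCycle G j J ∧ ∃! P : Finset V, P ∈ J ∧ P ∈ Flower K C

/-- A `j`-shell: a `(j+2)`-set all of whose `(j+1)`-subsets are `j`-simplices. -/
def IsShell (G : Set (Finset V)) (j : ℕ) (A : Finset V) : Prop :=
  A.card = j + 2 ∧ ∀ τ ⊆ A, τ.card = j + 1 → τ ∈ G

/-- A copy of `M_j^*`. -/
def IsMjStar [DecidableEq V] (G : Set (Finset V)) (k j : ℕ) (K C : Finset V) (w a : V) : Prop :=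
  IsMjMinus G k j K C ∧ w ∈ K \ C ∧ a ∉ K ∧ IsShell G j (insert a (insert w C))

/-- The support of a cochain. -/
def cochainSupport {G : Set (Finset V)} {i : ℕ} (f : Cochain G i) : Set (Finset V) :=
  {A | ∃ h : IsSimplex G i A, f ⟨A, h⟩ = 1}

/-- A cochain arising from a copy of `M_j^-`: its support is the flower `F(K,C)`. -/
def ArisesFrom [DecidableEq V] (G : Set (Finset V)) (k j : ℕ) (f : Cochain G j)
    (K C : Finset V) : Prop :=
  IsMjMinus G k j K C ∧ cochainSupport f = Flower K C

/-- A `j`-cocycle generated by copies of `M_j^-`: it differs by a `j`-coboundary from a sum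
of `j`-cocycles arising from copies of `M_j^-`. -/
def GeneratedByMjMinus [DecidableEq V] (G : Set (Finset V)) (k j : ℕ) (f : Cochain G j) : Prop :=
  ∃ (m : ℕ) (fs : Fin m → Cochain G j),
    (∀ i, ∃ K C, ArisesFrom G k j (fs i) K C) ∧
      f - (∑ i, fs i) ∈ coboundaries G j

/-- Membership in `N_G`: a `j`-cocycle not generated by copies of `M_j^-`. -/
def InNG [DecidableEq V] (G : Set (Finset V)) (k j : ℕ) (f : Cochain G j) : Prop :=
  f ∈ cocycles G j ∧ ¬ GeneratedByMjMinus G k j f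

/-- Traversability: the transitive closure of "lying in a common `k`-simplex" is `S × S`. -/
def Traversable (G : Set (Finset V)) (k : ℕ) (S : Set (Finset V)) : Prop :=
  ∀ σ₁ ∈ S, ∀ σ₂ ∈ S,
    Relation.TransGen
      (fun a b => a ∈ S ∧ b ∈ S ∧ ∃ K, IsSimplex G k K ∧ a ⊆ K ∧ b ⊆ K) σ₁ σ₂

/-- A local obstacle: a `k`-simplex containing at least `k-j+1` many `j`-simplices,
each lying in no other `k`-simplex. -/
def IsLocalObstacle (G : Set (Finset V)) (k j : ℕ) (K : Finset V) : Prop :=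
  IsSimplex G k K ∧
    k - j + 1 ≤ {σ : Finset V | IsSimplex G j σ ∧ σ ⊆ K ∧
      ∀ K', IsSimplex G k K' → σ ⊆ K' → K' = K}.ncard

/-- The random complex `G_p` given birth times `t`: all singletons together with all
non-empty subsets of `(k+1)`-sets with birth time at most `p`. -/
def complexAt (k n : ℕ) (t : Finset (Fin n) → ℝ) (p : ℝ) : Set (Finset (Fin n)) :=
  {A | (∃ v, A = {v}) ∨
    (A.Nonempty ∧ ∃ K : Finset (Fin n), K.card = k + 1 ∧ t K ≤ p ∧ A ⊆ K)}

/-- The distribution of birth times: i.i.d. uniform on `[0,1]`. -/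
noncomputable def birthMeasure (n : ℕ) : Measure (Finset (Fin n) → ℝ) :=
  Measure.pi fun _ => volume.restrict (Set.Icc (0 : ℝ) 1)

/-- `p_{M_j}`: the supremum of the probabilities `p ∈ [0,1]` at which `G_p` contains
a copy of `M_j`. -/
noncomputable def pMj (k j n : ℕ) (t : Finset (Fin n) → ℝ) : ℝ :=
  sSup {p : ℝ | p ∈ Set.Icc (0 : ℝ) 1 ∧
    ∃ K C J, IsMj (complexAt k n t p) k j K C J}

/-- The threshold `p_j`. -/
noncomputable def pjThreshold (k j n : ℕ) : ℝ :=
  ((j + 1 : ℝ) * Real.log n + Real.log (Real.log n)) * (Nat.factorial (k - j)) /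
    (((k - j + 1 : ℕ) : ℝ) * (n : ℝ) ^ (k - j))

/-- `p_j^-`. -/
noncomputable def pjMinus (k j n : ℕ) : ℝ :=
  (1 - 1 / Real.sqrt (Real.log n)) * ((j + 1 : ℝ) * Real.log n) * (Nat.factorial (k - j)) /
    (((k - j + 1 : ℕ) : ℝ) * (n : ℝ) ^ (k - j))

/-- `p_{j-1}^-`. -/
noncomputable def pjPrevMinus (k j n : ℕ) : ℝ :=
  (1 - 1 / Real.sqrt (Real.log n)) * ((j : ℝ) * Real.log n) * (Nat.factorial (k - j + 1)) /
    (((k - j + 2 : ℕ) : ℝ) * (n : ℝ) ^ (k - j + 1))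

/-- `p_j^{(1)}`. -/
noncomputable def pjOne (k j n : ℕ) : ℝ :=
  1 / (10 * ((j : ℝ) + 1) * (Nat.choose (k + 1) (j + 1)) * (n : ℝ) ^ (k - j))

/-- The number of copies of `M_j^-` in `G`. -/
noncomputable def countMjMinus (k j : ℕ) {n : ℕ} (G : Set (Finset (Fin n))) : ℕ :=
  {x : Finset (Fin n) × Finset (Fin n) | IsMjMinus G k j x.1 x.2}.ncard

/-- The number of copies of `M_j^*` in `G`. -/
noncomputable def countMjStar (k j : ℕ) {n : ℕ} (G : Set (Finset (Fin n))) : ℕ :=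
  {x : Finset (Fin n) × Finset (Fin n) × Fin n × Fin n |
    IsMjStar G k j x.1 x.2.1 x.2.2.1 x.2.2.2}.ncard

/-!
A flower `F(K,C)` is *isolated* if no `k`-simplex other than `K` contains one of its petals; the sum
of its petals is then a cocycle.

Until `(log n)^{3/4} / n^{k+1}` an isolated vertex disconnects the complex. For `i ≤ j`, between
`(log n)^{3/4} / n^{k-i+1}` and `(log n)^{3/4} / n^{k-i}`, the second moment method produces more
than `n.choose i` isolated flowers with centres of size `i`. Their cocycles have disjoint supports,
whereas the coboundaries have dimension at most `n.choose i`, so `H^i` is too large. The range is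
cut at `1 / n^{k-i}`: before it one counts flowers isolated throughout the whole window, after it
flowers already present at `1 / n^{k-i}`.

After `(log n)^{3/4} / n^{k-j}` isolated flowers become scarce, but every petal lies in a `j`-shell
whose other vertex is outside `K`. A coboundary sums to zero over a shell, and the shell meets the
flower in one petal only, so a single isolated flower suffices. One survives until a time after
which, by exchangeability, no newly born simplex has an isolated flower. Hence the flower in a copy
of `M_j` at a later time `q` was already isolated at all times between these two.
-/

/-! ### Events holding with high probability -/

section HighProbability

variable {Ω : ℕ → Type*} [∀ n, MeasurableSpace (Ω n)] {μ : ∀ n, Measure (Ω n)}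
  {E F : ∀ n, Ω n → Prop}

/-- The events `E n` hold with high probability under `μ n`. This is phrased through the outer
measure of the complement, so that it entails `μ n (E n) → 1` without any measurability. -/
def HoldsWhp (μ : ∀ n, Measure (Ω n)) (E : ∀ n, Ω n → Prop) : Prop :=
  Tendsto (fun n => (μ n).real {ω | ¬ E n ω}) atTop (nhds 0)

lemma HoldsWhp.of_le {f : ℕ → ℝ} (hf : Tendsto f atTop (nhds 0))
    (hle : ∀ᶠ n in atTop, (μ n).real {ω | ¬ E n ω} ≤ f n) : HoldsWhp μ E :=
  tendsto_of_tendsto_of_tendsto_of_le_of_le' tendsto_const_nhds hf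
    (Eventually.of_forall fun _ => measureReal_nonneg) hle

lemma HoldsWhp.forall_finset {ι : Type*} {P : ι → ∀ n, Ω n → Prop} (s : Finset ι)
    (hP : ∀ i ∈ s, HoldsWhp μ (P i)) : HoldsWhp μ fun n ω => ∀ i ∈ s, P i n ω := by
  refine .of_le (by simpa only [Finset.sum_const_zero] using tendsto_finsetSum s hP)
    (.of_forall fun n => ?_)
  calc (μ n).real {ω | ¬ ∀ i ∈ s, P i n ω}
      = (μ n).real (⋃ i ∈ s, {ω | ¬ P i n ω}) := by congr 1; ext; simp
    _ ≤ ∑ i ∈ s, (μ n).real {ω | ¬ P i n ω} := measureReal_biUnion_finset_le _ _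

variable [∀ n, IsProbabilityMeasure (μ n)]

lemma HoldsWhp.mono (hE : HoldsWhp μ E) (hEF : ∀ᶠ n in atTop, ∀ ω, E n ω → F n ω) :
    HoldsWhp μ F :=
  .of_le hE (hEF.mono fun _ h => measureReal_mono fun ω hω hEω => hω (h ω hEω))

lemma HoldsWhp.and (hE : HoldsWhp μ E) (hF : HoldsWhp μ F) :
    HoldsWhp μ fun n ω => E n ω ∧ F n ω := by
  refine .of_le (by simpa only [add_zero] using Tendsto.add hE hF) (.of_forall fun n => ?_)
  refine le_trans (measureReal_mono fun ω hω => ?_) (measureReal_union_le _ _)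
  exact not_and_or.mp hω

lemma HoldsWhp.tendsto_measure (hE : HoldsWhp μ E) :
    Tendsto (fun n => μ n {ω | E n ω}) atTop (nhds 1) := by
  have hcompl : Tendsto (fun n => μ n {ω | ¬ E n ω}) atTop (nhds 0) := by
    simpa [ofReal_measureReal] using ENNReal.tendsto_ofReal hE
  refine tendsto_of_tendsto_of_tendsto_of_le_of_le
    (by simpa using ENNReal.Tendsto.sub tendsto_const_nhds hcompl (.inl ENNReal.one_ne_top))
    tendsto_const_nhds (fun n => tsub_le_iff_right.mpr ?_) fun n => prob_le_one
  calc (1 : ENNReal) = μ n ({ω | E n ω} ∪ {ω | ¬ E n ω}) := by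
        rw [← measure_univ (μ := μ n)]
        congr 1
        exact (Set.union_compl_self {ω | E n ω}).symm
    _ ≤ μ n {ω | E n ω} + μ n {ω | ¬ E n ω} := measure_union_le _ _

end HighProbability

/-! ### The second moment method -/

section SecondMoment

open ProbabilityTheory

variable {Ω : Type*} [MeasurableSpace Ω] {μ : Measure Ω} [IsProbabilityMeasure μ]

lemma memLp_indicator_one {A : Set Ω} (hA : MeasurableSet A) :
    MemLp (A.indicator (1 : Ω → ℝ)) 2 μ :=
  (memLp_const (1 : ℝ)).indicator hA

lemma covariance_indicator_one {A B : Set Ω} (hA : MeasurableSet A) (hB : MeasurableSet B) :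
    cov[A.indicator (1 : Ω → ℝ), B.indicator (1 : Ω → ℝ); μ] =
      μ.real (A ∩ B) - μ.real A * μ.real B := by
  rw [covariance_eq_sub (memLp_indicator_one hA) (memLp_indicator_one hB),
    ← Set.inter_indicator_one, integral_indicator_one hA, integral_indicator_one hB,
    integral_indicator_one (hA.inter hB)]

variable {ι : Type*} {I : Finset ι} {E : ι → Set Ω} {q η : ℝ}

lemma variance_sum_indicator_one_le (hE : ∀ i, MeasurableSet (E i)) (hη : 0 ≤ η)
    (hprob : ∀ i ∈ I, μ.real (E i) = q)
    (hpair : ∀ i ∈ I, ∀ j ∈ I, i ≠ j → μ.real (E i ∩ E j) ≤ (1 + η) * q ^ 2) :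
    Var[∑ i ∈ I, (E i).indicator (1 : Ω → ℝ); μ] ≤ I.card * q + I.card ^ 2 * (η * q ^ 2) := by
  have hcov : ∀ i ∈ I, ∀ j ∈ I,
      cov[(E i).indicator (1 : Ω → ℝ), (E j).indicator (1 : Ω → ℝ); μ] ≤
        (if i = j then q else 0) + η * q ^ 2 := by
    intro i hi j hj
    rw [covariance_indicator_one (hE i) (hE j), hprob i hi, hprob j hj]
    split_ifs with hij
    · subst hij
      rw [Set.inter_self, hprob i hi]
      nlinarith [sq_nonneg q]
    · linarith [hpair i hi j hj hij]
  rw [variance_sum' fun i _ => memLp_indicator_one (hE i)]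
  refine (Finset.sum_le_sum fun i hi => Finset.sum_le_sum (hcov i hi)).trans (le_of_eq ?_)
  simp only [Finset.sum_add_distrib, Finset.sum_ite_eq, Finset.sum_ite_mem, Finset.inter_self,
    Finset.sum_const, nsmul_eq_mul]
  ring

lemma measureReal_card_le_half_le (hE : ∀ i, MeasurableSet (E i)) (hη : 0 ≤ η)
    (hprob : ∀ i ∈ I, μ.real (E i) = q)
    (hpair : ∀ i ∈ I, ∀ j ∈ I, i ≠ j → μ.real (E i ∩ E j) ≤ (1 + η) * q ^ 2)
    (hpos : 0 < I.card * q) :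
    μ.real {ω | ((I.filter fun i => ω ∈ E i).card : ℝ) ≤ I.card * q / 2} ≤
      4 * (1 / (I.card * q) + η) := by
  set X : Ω → ℝ := ∑ i ∈ I, (E i).indicator 1 with hX
  have hcard : ∀ ω, X ω = (I.filter fun i => ω ∈ E i).card := fun ω => by
    simp [hX, Set.indicator_apply]
  have hmean : ∫ ω, X ω ∂μ = I.card * q := by
    simp only [hX, Finset.sum_apply]
    rw [integral_finsetSum _ fun i _ => (memLp_indicator_one (hE i)).integrable one_le_two,
      Finset.sum_congr rfl fun i hi => (integral_indicator_one (hE i)).trans (hprob i hi),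
      Finset.sum_const, nsmul_eq_mul]
  have hchebyshev := meas_ge_le_variance_div_sq (μ := μ) (X := X)
    (memLp_finsetSum' I fun i _ => memLp_indicator_one (hE i)) (half_pos hpos)
  rw [hmean] at hchebyshev
  calc μ.real {ω | ((I.filter fun i => ω ∈ E i).card : ℝ) ≤ I.card * q / 2}
      ≤ μ.real {ω | I.card * q / 2 ≤ |X ω - I.card * q|} := by
        refine measureReal_mono fun ω hω => ?_
        have hω : X ω ≤ I.card * q / 2 := (hcard ω).trans_le hω
        rw [Set.mem_ofPred_eq, le_abs]
        right
        linarith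
    _ ≤ Var[X; μ] / (I.card * q / 2) ^ 2 :=
        ENNReal.toReal_le_of_le_ofReal (by positivity [variance_nonneg X μ]) hchebyshev
    _ ≤ (I.card * q + I.card ^ 2 * (η * q ^ 2)) / (I.card * q / 2) ^ 2 := by
        gcongr
        exact variance_sum_indicator_one_le hE hη hprob hpair
    _ = 4 * (1 / (I.card * q) + η) := by
        have hI : (I.card : ℝ) ≠ 0 := left_ne_zero_of_mul hpos.ne'
        have hq : q ≠ 0 := right_ne_zero_of_mul hpos.ne'
        field_simp
        ring

end SecondMoment

/-! ### Independent identically distributed families -/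

section IID

variable {ι α : Type*} [MeasurableSpace α]

lemma measurableSet_forall_mem (S : Finset ι) {A : Set α} (hA : MeasurableSet A) :
    MeasurableSet {t : ι → α | ∀ i ∈ S, t i ∈ A} := by
  simp only [Set.ofPred_forall]
  exact Finset.measurableSet_biInter _ fun i _ => measurable_pi_apply i hA

/-- The event that `t i` is smaller than `t i'` for every other `i' ∈ S`, while all these values
exceed `b`. -/
def strictMinAbove (S : Finset ι) (b : ℝ) (i : ι) : Set (ι → ℝ) :=
  {t | b < t i ∧ ∀ i' ∈ S, i' ≠ i → t i < t i'}

lemma disjoint_strictMinAbove {S : Finset ι} {b : ℝ} {i i' : ι} (hi : i ∈ S) (hi' : i' ∈ S)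
    (hne : i ≠ i') : Disjoint (strictMinAbove S b i) (strictMinAbove S b i') :=
  Set.disjoint_left.mpr fun _ h h' => lt_asymm (h.2 i' hi' hne.symm) (h'.2 i hi hne)

lemma measurableSet_strictMinAbove (S : Finset ι) (b : ℝ) (i : ι) :
    MeasurableSet (strictMinAbove S b i) := by
  refine (measurableSet_lt measurable_const (measurable_pi_apply i)).inter ?_
  change MeasurableSet {t : ι → ℝ | ∀ i' ∈ S, i' ≠ i → t i < t i'}
  simp only [Set.ofPred_forall]
  exact Finset.measurableSet_biInter _ fun i' _ => .iInter fun _ =>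
    measurableSet_lt (measurable_pi_apply i) (measurable_pi_apply i')

variable [Fintype ι]

lemma measureReal_pi_forall_mem (ν : Measure α) [IsProbabilityMeasure ν] {S T : Finset ι}
    (hST : Disjoint S T) (A B : Set α) :
    (Measure.pi fun _ : ι => ν).real {t | (∀ i ∈ S, t i ∈ A) ∧ ∀ i ∈ T, t i ∈ B} =
      ν.real A ^ S.card * ν.real B ^ T.card := by
  have hset : {t : ι → α | (∀ i ∈ S, t i ∈ A) ∧ ∀ i ∈ T, t i ∈ B} =
      Set.univ.pi fun i => if i ∈ S then A else if i ∈ T then B else Set.univ := by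
    ext t
    simp only [Set.mem_ofPred_eq, Set.mem_univ_pi]
    refine ⟨fun h i => ?_, fun h => ⟨fun i hi => ?_, fun i hi => ?_⟩⟩
    · split_ifs with hS hT
      exacts [h.1 i hS, h.2 i hT, trivial]
    · simpa only [hi, if_true] using h i
    · simpa only [hi, Finset.disjoint_right.mp hST hi, if_true, if_false] using h i
  have hfactor : ∀ i, ν.real (if i ∈ S then A else if i ∈ T then B else Set.univ) =
      (if i ∈ S then ν.real A else 1) * if i ∈ T then ν.real B else 1 := fun i => by
    by_cases hS : i ∈ S
    · simp [hS, Finset.disjoint_left.mp hST hS]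
    · by_cases hT : i ∈ T <;> simp [hS, hT]
  rw [hset, measureReal_def, Measure.pi_pi, ENNReal.toReal_prod]
  change ∏ i, ν.real _ = _
  simp only [hfactor, Finset.prod_mul_distrib, Finset.prod_ite_mem, Finset.univ_inter,
    Finset.prod_const]

lemma measureReal_strictMinAbove_eq (ν : Measure ℝ) [SigmaFinite ν] {S : Finset ι} (b : ℝ)
    {i i' : ι} (hi : i ∈ S) (hi' : i' ∈ S) :
    (Measure.pi fun _ : ι => ν).real (strictMinAbove S b i) =
      (Measure.pi fun _ : ι => ν).real (strictMinAbove S b i') := by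
  classical
  set σ : Equiv.Perm ι := Equiv.swap i i' with hσ
  have hσσ : ∀ x, σ (σ x) = x := fun x => by simp [hσ]
  have hσS : ∀ x ∈ S, σ x ∈ S := fun x hx => by
    rw [hσ, Equiv.swap_apply_def]
    split_ifs <;> assumption
  have hperm : ∀ t x, MeasurableEquiv.piCongrLeft (fun _ : ι => ℝ) σ t x = t (σ x) := fun t x => by
    have h := Equiv.piCongrLeft_apply_apply (fun _ : ι => ℝ) σ t (σ x)
    rwa [hσσ] at h
  rw [← (measurePreserving_piCongrLeft (fun _ : ι => ν) σ).measureReal_preimage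
    (measurableSet_strictMinAbove S b i).nullMeasurableSet]
  congr 1
  ext t
  simp only [strictMinAbove, Set.mem_preimage, Set.mem_ofPred_eq, hperm,
    show σ i = i' from Equiv.swap_apply_left i i']
  refine and_congr_right fun _ => ⟨fun h x hx hne => ?_, fun h x hx hne => ?_⟩
  · simpa only [hσσ] using h (σ x) (hσS x hx) fun he => hne (by
      rw [← hσσ x, he, hσ, Equiv.swap_apply_left])
  · exact h (σ x) (hσS x hx) fun he => hne (by rw [← hσσ x, he, hσ, Equiv.swap_apply_right])

lemma measureReal_strictMinAbove_le (ν : Measure ℝ) [IsProbabilityMeasure ν] {S : Finset ι}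
    (b : ℝ) {i : ι} (hi : i ∈ S) :
    (Measure.pi fun _ : ι => ν).real (strictMinAbove S b i) ≤
      ν.real (Set.Ioi b) ^ S.card / S.card := by
  have hpos : (0 : ℝ) < S.card := by exact_mod_cast Finset.card_pos.mpr ⟨i, hi⟩
  rw [le_div_iff₀ hpos]
  calc (Measure.pi fun _ : ι => ν).real (strictMinAbove S b i) * S.card
      = ∑ i' ∈ S, (Measure.pi fun _ : ι => ν).real (strictMinAbove S b i') := by
        rw [Finset.sum_congr rfl fun i' hi' => measureReal_strictMinAbove_eq ν b hi' hi,
          Finset.sum_const, nsmul_eq_mul, mul_comm]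
    _ = (Measure.pi fun _ : ι => ν).real (⋃ i' ∈ S, strictMinAbove S b i') :=
        (measureReal_biUnion_finset
          (fun _ h _ h' hne => disjoint_strictMinAbove h h' hne)
          fun i' _ => measurableSet_strictMinAbove S b i').symm
    _ ≤ (Measure.pi fun _ : ι => ν).real
          {t | (∀ x ∈ (∅ : Finset ι), t x ∈ Set.univ) ∧ ∀ x ∈ S, t x ∈ Set.Ioi b} := by
        refine measureReal_mono fun t ht => ⟨by simp, fun x hx => ?_⟩
        obtain ⟨i', hi', hlt, hmin⟩ := by simpa only [Set.mem_iUnion, exists_prop] using ht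
        rcases eq_or_ne x i' with rfl | hne
        exacts [hlt, hlt.trans (hmin x hx hne)]
    _ = ν.real (Set.Ioi b) ^ S.card := by
        rw [measureReal_pi_forall_mem ν (Finset.disjoint_empty_left S), Finset.card_empty,
          pow_zero, one_mul]

end IID

/-! ### Uniform birth times -/

section BirthTimes

instance isProbabilityMeasure_volume_Icc_zero_one :
    IsProbabilityMeasure ((volume : Measure ℝ).restrict (Set.Icc 0 1)) :=
  ⟨by simp⟩

instance isProbabilityMeasure_birthMeasure (n : ℕ) : IsProbabilityMeasure (birthMeasure n) :=
  inferInstanceAs (IsProbabilityMeasure (Measure.pi _))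

lemma volume_Icc_zero_one_real_Iic {a : ℝ} (h0 : 0 ≤ a) (h1 : a ≤ 1) :
    ((volume : Measure ℝ).restrict (Set.Icc 0 1)).real (Set.Iic a) = a := by
  have hinter : Set.Iic a ∩ Set.Icc 0 1 = Set.Icc 0 a := by
    ext x
    simp only [Set.mem_inter_iff, Set.mem_Iic, Set.mem_Icc]
    exact ⟨fun h => ⟨h.2.1, h.1⟩, fun h => ⟨h.2, h.1, h.2.trans h1⟩⟩
  rw [measureReal_restrict_apply measurableSet_Iic, hinter, Real.volume_real_Icc_of_le h0, sub_zero]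

lemma volume_Icc_zero_one_real_Ioi {b : ℝ} (h0 : 0 ≤ b) (h1 : b ≤ 1) :
    ((volume : Measure ℝ).restrict (Set.Icc 0 1)).real (Set.Ioi b) = 1 - b := by
  rw [← Set.compl_Iic, probReal_compl_eq_one_sub measurableSet_Iic,
    volume_Icc_zero_one_real_Iic h0 h1]

variable {n : ℕ} {a b : ℝ}

lemma measurableSet_forall_le_and_forall_lt (S T : Finset (Finset (Fin n))) (a b : ℝ) :
    MeasurableSet {t : Finset (Fin n) → ℝ | (∀ K ∈ S, t K ≤ a) ∧ ∀ K ∈ T, b < t K} :=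
  (measurableSet_forall_mem S measurableSet_Iic).inter
    (measurableSet_forall_mem T measurableSet_Ioi)

lemma birthMeasure_real_forall_le_and_forall_lt {S T : Finset (Finset (Fin n))}
    (hST : Disjoint S T) (ha : a ∈ Set.Icc 0 1) (hb : b ∈ Set.Icc 0 1) :
    (birthMeasure n).real {t | (∀ K ∈ S, t K ≤ a) ∧ ∀ K ∈ T, b < t K} =
      a ^ S.card * (1 - b) ^ T.card := by
  have h := measureReal_pi_forall_mem (volume.restrict (Set.Icc 0 1)) hST (Set.Iic a) (Set.Ioi b)
  rwa [volume_Icc_zero_one_real_Iic ha.1 ha.2, volume_Icc_zero_one_real_Ioi hb.1 hb.2] at h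

lemma birthMeasure_real_le (K : Finset (Fin n)) (ha : a ∈ Set.Icc 0 1) :
    (birthMeasure n).real {t | t K ≤ a} = a := by
  simpa using birthMeasure_real_forall_le_and_forall_lt
    (a := a) (b := 0) (Finset.disjoint_empty_right {K}) ha (Set.left_mem_Icc.mpr zero_le_one)

lemma birthMeasure_real_forall_lt (T : Finset (Finset (Fin n))) (hb : b ∈ Set.Icc 0 1) :
    (birthMeasure n).real {t | ∀ K ∈ T, b < t K} = (1 - b) ^ T.card := by
  simpa using birthMeasure_real_forall_le_and_forall_lt
    (a := 0) (Finset.disjoint_empty_left T) (Set.left_mem_Icc.mpr zero_le_one) hb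

lemma birthMeasure_real_strictMinAbove_le {S : Finset (Finset (Fin n))} (hb : b ∈ Set.Icc 0 1)
    {K : Finset (Fin n)} (hK : K ∈ S) :
    (birthMeasure n).real (strictMinAbove S b K) ≤ (1 - b) ^ S.card / S.card := by
  have h := measureReal_strictMinAbove_le (volume.restrict (Set.Icc 0 1)) b hK
  rwa [volume_Icc_zero_one_real_Ioi hb.1 hb.2] at h

end BirthTimes

/-! ### Counting the simplices around a flower -/

section Counting

lemma card_filter_subset_powersetCard [DecidableEq V] {C W : Finset V} (hCW : C ⊆ W) {m : ℕ}
    (hCm : C.card ≤ m) :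
    ((W.powersetCard m).filter (C ⊆ ·)).card = (W.card - C.card).choose (m - C.card) := by
  rw [← Finset.card_sdiff_of_subset hCW, ← Finset.card_powersetCard]
  refine Finset.card_nbij' (· \ C) (· ∪ C) (fun K hK => ?_) (fun A hA => ?_) (fun K hK => ?_)
    fun A hA => ?_
  all_goals simp only [Finset.coe_filter, Finset.mem_coe, Finset.mem_powersetCard,
    Set.mem_ofPred_eq] at *
  · exact ⟨Finset.sdiff_subset_sdiff hK.1.1 le_rfl, by
      rw [Finset.card_sdiff_of_subset hK.2, hK.1.2]⟩
  · refine ⟨⟨Finset.union_subset (hA.1.trans Finset.sdiff_subset) hCW, ?_⟩,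
      Finset.subset_union_right⟩
    rw [Finset.card_union_of_disjoint (Finset.sdiff_disjoint.mono_left hA.1), hA.2]
    omega
  · exact Finset.sdiff_union_of_subset hK.2
  · exact Finset.union_sdiff_cancel_right (Finset.sdiff_disjoint.mono_left hA.1)

variable [Fintype V] [DecidableEq V] {k i : ℕ} {K C K' : Finset V}

/-- The `(k+1)`-sets containing a petal of the flower `F(K,C)`; `K` is one of them. -/
noncomputable def petalSupersets (k : ℕ) (K C : Finset V) : Finset (Finset V) :=
  (Finset.univ.powersetCard (k + 1)).filter fun K' => ∃ P ∈ Flower K C, P ⊆ K'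

lemma mem_petalSupersets :
    K' ∈ petalSupersets k K C ↔ K'.card = k + 1 ∧ C ⊆ K' ∧ ∃ w ∈ K \ C, w ∈ K' := by
  rw [petalSupersets, Finset.mem_filter, Finset.mem_powersetCard_univ]
  refine and_congr_right fun _ => ⟨?_, fun ⟨hC, w, hw, hwK'⟩ => ?_⟩
  · rintro ⟨_, ⟨w, hw, rfl⟩, hP⟩
    exact ⟨(Finset.insert_subset_iff.mp hP).2, w, hw, (Finset.insert_subset_iff.mp hP).1⟩
  · exact ⟨insert w C, ⟨w, hw, rfl⟩, Finset.insert_subset hwK' hC⟩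

lemma self_mem_petalSupersets (hK : K.card = k + 1) (hCK : C ⊆ K) (hC : C.card ≤ k) :
    K ∈ petalSupersets k K C := by
  obtain ⟨w, hw⟩ : (K \ C).Nonempty := by
    rw [← Finset.card_pos, Finset.card_sdiff_of_subset hCK]
    omega
  exact mem_petalSupersets.mpr ⟨hK, hCK, w, hw, (Finset.mem_sdiff.mp hw).1⟩

/-- The number of `(k+1)`-subsets of an `N`-set that contain a petal of a given flower with centre
of size `i`: those containing the centre, minus those meeting `K` in the centre only. -/
def flowerDegree (N k i : ℕ) : ℕ :=
  (N - i).choose (k + 1 - i) - (N - (k + 1)).choose (k + 1 - i)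

lemma card_petalSupersets (hK : K.card = k + 1) (hCK : C ⊆ K) :
    (petalSupersets k K C).card = flowerDegree (Fintype.card V) k C.card := by
  have hCk : C.card ≤ k + 1 := hK ▸ Finset.card_le_card hCK
  have hCW : C ⊆ (K \ C)ᶜ := fun x hx => by simp [hx]
  have hsplit : petalSupersets k K C =
      (Finset.univ.powersetCard (k + 1)).filter (C ⊆ ·) \
        ((K \ C)ᶜ.powersetCard (k + 1)).filter (C ⊆ ·) := by
    ext K'
    simp only [mem_petalSupersets, Finset.mem_sdiff, Finset.mem_filter, Finset.mem_powersetCard,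
      Finset.subset_univ, true_and, Finset.subset_compl_iff_disjoint_right]
    have hmeet : ¬ Disjoint K' (K \ C) ↔ ∃ w, (w ∈ K ∧ w ∉ C) ∧ w ∈ K' := by
      simp only [Finset.not_disjoint_iff, Finset.mem_sdiff, and_comm]
    rw [← hmeet]
    tauto
  rw [hsplit, Finset.card_sdiff_of_subset,
    card_filter_subset_powersetCard (Finset.subset_univ C) hCk,
    card_filter_subset_powersetCard hCW hCk, Finset.card_univ, Finset.card_compl,
    Finset.card_sdiff_of_subset hCK, hK, flowerDegree]
  · congr 2
    have := hK ▸ Finset.card_le_univ K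
    omega
  · exact Finset.filter_subset_filter _ (Finset.powersetCard_mono (Finset.subset_univ _))

/-- The `(k+1)`-sets other than `K` that contain a petal of the flower `F(K,C)`. -/
noncomputable def flowerNeighbours (k : ℕ) (K C : Finset V) : Finset (Finset V) :=
  (petalSupersets k K C).erase K

lemma card_flowerNeighbours (hK : K.card = k + 1) (hCK : C ⊆ K) (hC : C.card ≤ k) :
    (flowerNeighbours k K C).card = flowerDegree (Fintype.card V) k C.card - 1 := by
  rw [flowerNeighbours, Finset.card_erase_of_mem (self_mem_petalSupersets hK hCK hC),
    card_petalSupersets hK hCK]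

lemma card_filter_subset_powersetCard_univ_le {D : Finset V} {e : ℕ} (heD : e ≤ D.card)
    (hek : e ≤ k + 1) :
    ((Finset.univ.powersetCard (k + 1)).filter (D ⊆ ·)).card ≤ Fintype.card V ^ (k + 1 - e) := by
  obtain ⟨D', hD', rfl⟩ := Finset.exists_subset_card_eq heD
  calc ((Finset.univ.powersetCard (k + 1)).filter (D ⊆ ·)).card
      ≤ ((Finset.univ.powersetCard (k + 1)).filter (D' ⊆ ·)).card :=
        Finset.card_le_card (Finset.monotone_filter_right _ fun _ _ h => hD'.trans h)
    _ = (Fintype.card V - D'.card).choose (k + 1 - D'.card) :=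
        card_filter_subset_powersetCard (Finset.subset_univ D') hek
    _ ≤ (Fintype.card V).choose (k + 1 - D'.card) := Nat.choose_le_choose _ (Nat.sub_le _ _)
    _ ≤ Fintype.card V ^ (k + 1 - D'.card) := Nat.choose_le_pow _ _

variable {K₁ K₂ C₁ C₂ : Finset V}

lemma card_lt_card_union_petals (hK₂ : K₂.card = k + 1) (hC₂K₂ : C₂ ⊆ K₂)
    (hC : C₁.card = C₂.card) (hnot : K₂ ∉ petalSupersets k K₁ C₁) {w₁ w₂ : V}
    (hw₁ : w₁ ∈ K₁ \ C₁) (hw₂ : w₂ ∈ K₂ \ C₂) :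
    (insert w₁ C₁).card < (insert w₁ C₁ ∪ insert w₂ C₂).card := by
  by_contra! hle
  have hcard : (insert w₁ C₁).card = (insert w₂ C₂).card := by
    rw [Finset.card_insert_of_notMem (Finset.mem_sdiff.mp hw₁).2,
      Finset.card_insert_of_notMem (Finset.mem_sdiff.mp hw₂).2, hC]
  have hpetals : insert w₁ C₁ = insert w₂ C₂ :=
    (Finset.eq_of_subset_of_card_le Finset.subset_union_left hle).trans
      (Finset.eq_of_subset_of_card_le Finset.subset_union_right (hcard ▸ hle)).symm
  have hsub : insert w₁ C₁ ⊆ K₂ :=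
    hpetals ▸ Finset.insert_subset (Finset.mem_sdiff.mp hw₂).1 hC₂K₂
  exact hnot (mem_petalSupersets.mpr ⟨hK₂, (Finset.subset_insert _ _).trans hsub, w₁, hw₁,
    hsub (Finset.mem_insert_self _ _)⟩)

lemma card_petalSupersets_inter_le (hik : i < k) (hK₁ : K₁.card = k + 1) (hK₂ : K₂.card = k + 1)
    (hC₂K₂ : C₂ ⊆ K₂) (hC₁ : C₁.card = i) (hC₂ : C₂.card = i)
    (hnot : K₂ ∉ petalSupersets k K₁ C₁) :
    (petalSupersets k K₁ C₁ ∩ petalSupersets k K₂ C₂).card ≤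
      (k + 1) ^ 2 * Fintype.card V ^ (k - i - 1) := by
  have hcover : petalSupersets k K₁ C₁ ∩ petalSupersets k K₂ C₂ ⊆
      ((K₁ \ C₁) ×ˢ (K₂ \ C₂)).biUnion fun w =>
        (Finset.univ.powersetCard (k + 1)).filter (insert w.1 C₁ ∪ insert w.2 C₂ ⊆ ·) := by
    intro K' hK'
    obtain ⟨hK'₁, hK'₂⟩ := Finset.mem_inter.mp hK'
    obtain ⟨hcard, hCK'₁, w₁, hw₁, hwK'₁⟩ := mem_petalSupersets.mp hK'₁
    obtain ⟨-, hCK'₂, w₂, hw₂, hwK'₂⟩ := mem_petalSupersets.mp hK'₂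
    simp only [Finset.mem_biUnion, Finset.mem_filter, Finset.mem_powersetCard_univ]
    exact ⟨(w₁, w₂), Finset.mem_product.mpr ⟨hw₁, hw₂⟩, hcard,
      Finset.union_subset (Finset.insert_subset hwK'₁ hCK'₁) (Finset.insert_subset hwK'₂ hCK'₂)⟩
  refine (Finset.card_le_card hcover).trans ((Finset.card_biUnion_le_card_mul _ _ _ ?_).trans
    (Nat.mul_le_mul_right _ ?_))
  · rintro w hw
    obtain ⟨hw₁, hw₂⟩ := Finset.mem_product.mp hw
    have hlt := card_lt_card_union_petals hK₂ hC₂K₂ (hC₁.trans hC₂.symm) hnot hw₁ hw₂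
    rw [Finset.card_insert_of_notMem (Finset.mem_sdiff.mp hw₁).2, hC₁] at hlt
    rw [show k - i - 1 = k + 1 - (i + 2) by omega]
    exact card_filter_subset_powersetCard_univ_le hlt (by omega)
  · rw [Finset.card_product, sq]
    exact Nat.mul_le_mul ((Finset.card_le_card Finset.sdiff_subset).trans hK₁.le)
      ((Finset.card_le_card Finset.sdiff_subset).trans hK₂.le)

lemma card_flowerNeighbours_inter_le (hik : i < k) (hK₁ : K₁.card = k + 1) (hK₂ : K₂.card = k + 1)
    (hne : K₁ ≠ K₂) (hC₂K₂ : C₂ ⊆ K₂) (hC₁ : C₁.card = i) (hC₂ : C₂.card = i)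
    (hnot : K₂ ∉ flowerNeighbours k K₁ C₁) :
    (flowerNeighbours k K₁ C₁ ∩ flowerNeighbours k K₂ C₂).card ≤
      (k + 1) ^ 2 * Fintype.card V ^ (k - i - 1) := by
  refine (Finset.card_le_card (Finset.inter_subset_inter (Finset.erase_subset _ _)
    (Finset.erase_subset _ _))).trans (card_petalSupersets_inter_le hik hK₁ hK₂ hC₂K₂ hC₁ hC₂ ?_)
  exact fun hmem => hnot (Finset.mem_erase.mpr ⟨hne.symm, hmem⟩)

end Counting

section Centre

variable {i : ℕ} {K : Finset V}

/-- A chosen `i`-element subset of `K`; the junk value `∅` is taken when `K` has fewer than `i`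
elements. -/
noncomputable def centre (i : ℕ) (K : Finset V) : Finset V :=
  if h : i ≤ K.card then (Finset.exists_subset_card_eq h).choose else ∅

lemma centre_subset (h : i ≤ K.card) : centre i K ⊆ K := by
  rw [centre, dif_pos h]
  exact (Finset.exists_subset_card_eq h).choose_spec.1

lemma card_centre (h : i ≤ K.card) : (centre i K).card = i := by
  rw [centre, dif_pos h]
  exact (Finset.exists_subset_card_eq h).choose_spec.2

end Centre

section BinomialBounds

lemma pow_le_mul_choose {r n : ℕ} (h : 2 * r ≤ n) :
    (n : ℝ) ^ r ≤ 2 ^ r * r.factorial * n.choose r := by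
  have hhalf : (n : ℝ) ≤ 2 * (n + 1 - r : ℕ) := by
    exact_mod_cast (by omega : n ≤ 2 * (n + 1 - r))
  calc (n : ℝ) ^ r ≤ (2 * (n + 1 - r : ℕ)) ^ r := by gcongr
    _ = 2 ^ r * r.factorial * ((n + 1 - r : ℕ) ^ r / r.factorial) := by
        field_simp
        ring
    _ ≤ 2 ^ r * r.factorial * n.choose r := by
        gcongr
        exact Nat.pow_le_choose r n

lemma choose_add_le (a r s : ℕ) :
    (a + s).choose (r + 1) ≤ a.choose (r + 1) + s * (a + s) ^ r := by
  induction s with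
  | zero => simp
  | succ s ih =>
    calc (a + (s + 1)).choose (r + 1)
        = (a + s).choose r + (a + s).choose (r + 1) := Nat.choose_succ_succ _ _
      _ ≤ (a + s) ^ r + (a.choose (r + 1) + s * (a + s) ^ r) :=
          Nat.add_le_add (Nat.choose_le_pow _ _) ih
      _ = a.choose (r + 1) + (s + 1) * (a + s) ^ r := by ring
      _ ≤ a.choose (r + 1) + (s + 1) * (a + (s + 1)) ^ r := by
          gcongr
          omega

variable {n k i : ℕ}

lemma flowerDegree_le (hik : i ≤ k) (hn : k + 1 ≤ n) :
    flowerDegree n k i ≤ (k + 1) * n ^ (k - i) := by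
  have h := choose_add_le (n - (k + 1)) (k - i) (k + 1 - i)
  rw [show n - (k + 1) + (k + 1 - i) = n - i by omega, show k - i + 1 = k + 1 - i by omega] at h
  calc flowerDegree n k i ≤ (k + 1 - i) * (n - i) ^ (k - i) := Nat.sub_le_iff_le_add'.mpr h
    _ ≤ (k + 1) * n ^ (k - i) :=
        Nat.mul_le_mul (Nat.sub_le _ _) (Nat.pow_le_pow_left (Nat.sub_le _ _) _)

lemma choose_le_flowerDegree (hik : i ≤ k) (hn : k + 1 ≤ n) :
    (n - i - 1).choose (k - i) ≤ flowerDegree n k i := by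
  have hpascal : (n - i).choose (k + 1 - i) =
      (n - i - 1).choose (k - i) + (n - i - 1).choose (k + 1 - i) := by
    rw [show n - i = n - i - 1 + 1 by omega, show k + 1 - i = k - i + 1 by omega,
      Nat.choose_succ_succ, Nat.add_sub_cancel]
  have hmono : (n - (k + 1)).choose (k + 1 - i) ≤ (n - i - 1).choose (k + 1 - i) :=
    Nat.choose_le_choose _ (by omega)
  rw [flowerDegree]
  omega

lemma flowerDegree_pos (hik : i ≤ k) (hn : k + 1 ≤ n) : 0 < flowerDegree n k i :=
  (Nat.choose_pos (by omega)).trans_le (choose_le_flowerDegree hik hn)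

lemma pow_le_mul_flowerDegree (hik : i ≤ k) (hn : 4 * k + 4 ≤ n) :
    (n : ℝ) ^ (k - i) ≤ 4 ^ (k - i) * (k - i).factorial * flowerDegree n k i := by
  have hhalf : (n : ℝ) ≤ 2 * (n - i - 1 : ℕ) := by
    exact_mod_cast (by omega : n ≤ 2 * (n - i - 1))
  calc (n : ℝ) ^ (k - i) ≤ (2 * (n - i - 1 : ℕ)) ^ (k - i) := by gcongr
    _ = 2 ^ (k - i) * (n - i - 1 : ℕ) ^ (k - i) := mul_pow _ _ _
    _ ≤ 2 ^ (k - i) * (2 ^ (k - i) * (k - i).factorial * (n - i - 1).choose (k - i)) := by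
        gcongr
        exact pow_le_mul_choose (by omega)
    _ ≤ 2 ^ (k - i) * (2 ^ (k - i) * (k - i).factorial * flowerDegree n k i) := by
        gcongr
        exact choose_le_flowerDegree hik (by omega)
    _ = 4 ^ (k - i) * (k - i).factorial * flowerDegree n k i := by
        rw [show (4 : ℝ) = 2 * 2 by norm_num, mul_pow]
        ring

end BinomialBounds

/-! ### Cohomological obstructions -/

section Cohomology

/-- A `k`-dimensional simplicial complex in which every simplex, apart from isolated vertices, is a
face of some `k`-simplex. -/
structure IsPureComplex (G : Set (Finset V)) (k : ℕ) : Prop extends IsKComplex G k where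
  exists_facet : ∀ A ∈ G, 2 ≤ A.card → ∃ K, IsSimplex G k K ∧ A ⊆ K

/-- The `k`-simplex `K` is the only one containing a petal of the flower `F(K,C)`. Unlike in
`IsMjMinus` the centre `C` may be empty, so that the notion covers isolated `k`-simplices too. -/
structure IsIsolatedFlower [DecidableEq V] (G : Set (Finset V)) (k : ℕ) (K C : Finset V) :
    Prop where
  isSimplex : IsSimplex G k K
  subset : C ⊆ K
  eq_of_petal_subset : ∀ P ∈ Flower K C, ∀ K', IsSimplex G k K' → P ⊆ K' → K' = K

/-- The indicator cochain of the petals of the flower `F(K,C)`. -/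
noncomputable def flowerCochain [DecidableEq V] (G : Set (Finset V)) (i : ℕ) (K C : Finset V) :
    Cochain G i :=
  fun A => (Flower K C).indicator 1 A.1

variable {G : Set (Finset V)} {k i j : ℕ}

lemma coboundary_apply (hG : IsKComplex G k) (g : Finset V → ZMod 2)
    (σ : {A : Finset V // IsSimplex G (i + 1) A}) :
    coboundary G i (fun A => g A) σ = ∑ τ ∈ Finset.powersetCard (i + 1) (σ : Finset V), g τ := by
  refine Finset.sum_congr rfl fun τ hτ => dif_pos ?_
  obtain ⟨hτσ, hτcard⟩ := Finset.mem_powersetCard.mp hτ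
  exact ⟨hG.down _ σ.2.1 _ hτσ (Finset.card_pos.mp (by omega)), hτcard⟩

lemma mem_coboundaries_of_subsingleton_cohomology (h : Subsingleton (cohomology G i))
    {f : Cochain G i} (hf : f ∈ cocycles G i) : f ∈ coboundaries G i := by
  have htop := Submodule.Quotient.subsingleton_iff.mp h
  have hmem : (⟨f, hf⟩ : cocycles G i) ∈ (coboundaries G i).comap (cocycles G i).subtype :=
    htop ▸ Submodule.mem_top
  exact hmem

lemma finrank_cocycles_zero (h : CohomConnected G j) :
    Module.finrank (ZMod 2) (cocycles G 0) = 1 := by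
  obtain ⟨⟨e⟩, -⟩ := h
  have hbot : (coboundaries G 0).comap (cocycles G 0).subtype = ⊥ :=
    (Submodule.comap_bot _).trans (Submodule.ker_subtype _)
  rw [((Submodule.quotEquivOfEqBot _ hbot).symm.trans e).finrank_eq, Module.finrank_self]

lemma finrank_cocycles_le_choose [Fintype V] (h : CohomConnected G j) (hij : i ≤ j) :
    Module.finrank (ZMod 2) (cocycles G i) ≤ (Fintype.card V).choose i := by
  cases i with
  | zero => rw [finrank_cocycles_zero h, Nat.choose_zero_right]
  | succ i =>
    have hle : cocycles G (i + 1) ≤ LinearMap.range (coboundary G i) := fun f hf =>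
      mem_coboundaries_of_subsingleton_cohomology (h.2 _ i.succ_pos hij) hf
    calc Module.finrank (ZMod 2) (cocycles G (i + 1))
        ≤ Module.finrank (ZMod 2) (LinearMap.range (coboundary G i)) := Submodule.finrank_mono hle
      _ ≤ Module.finrank (ZMod 2) (Cochain G i) := LinearMap.finrank_range_le _
      _ = Fintype.card {A : Finset V // IsSimplex G i A} := Module.finrank_fintype_fun_eq_card _
      _ ≤ Fintype.card {A : Finset V // A.card = i + 1} :=
          Fintype.card_le_of_injective (fun A => ⟨A.1, A.2.2⟩) fun A B hAB =>
            Subtype.ext (congrArg (·.1) hAB)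
      _ = (Fintype.card V).choose (i + 1) := Fintype.card_finset_len _

theorem not_cohomConnected_of_isolated_vertex [Nontrivial V] (hG : IsKComplex G k) {v : V}
    (hv : ∀ A ∈ G, v ∈ A → A = {v}) : ¬ CohomConnected G j := by
  intro hconn
  have hvertex (x : V) : IsSimplex G 0 {x} := ⟨hG.singletons x, Finset.card_singleton x⟩
  have hone : (fun _ => 1 : Cochain G 0) ∈ cocycles G 0 := by
    refine LinearMap.mem_ker.mpr (funext fun σ => ?_)
    rw [coboundary_apply hG (fun _ => 1), Finset.sum_const, Finset.card_powersetCard, σ.2.2]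
    rfl
  have hindicator : (fun A => if A.1 = {v} then 1 else 0 : Cochain G 0) ∈ cocycles G 0 := by
    refine LinearMap.mem_ker.mpr (funext fun σ => ?_)
    rw [coboundary_apply hG (fun A => if A = {v} then 1 else 0)]
    refine Finset.sum_eq_zero fun τ hτ => if_neg ?_
    rintro rfl
    have hvσ := Finset.singleton_subset_iff.mp (Finset.mem_powersetCard.mp hτ).1
    have hσ := σ.2.2
    rw [hv _ σ.2.1 hvσ, Finset.card_singleton] at hσ
    omega
  have hne : (⟨_, hindicator⟩ : cocycles G 0) ≠ 0 := fun h => by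
    simpa using congrFun (congrArg Subtype.val h) ⟨{v}, hvertex v⟩
  obtain ⟨c, hc⟩ :=
    (finrank_eq_one_iff_of_nonzero' _ hne).mp (finrank_cocycles_zero hconn) ⟨_, hone⟩
  obtain ⟨u, hu⟩ := exists_ne v
  simpa [hu] using congrFun (congrArg Subtype.val hc) ⟨{u}, hvertex u⟩

lemma sum_faces_sum_faces_eq_zero {S : Finset V} (hS : S.card = i + 2) (g : Finset V → ZMod 2) :
    ∑ P ∈ Finset.powersetCard (i + 1) S, ∑ τ ∈ Finset.powersetCard i P, g τ = 0 := by
  have hcomm : ∑ P ∈ Finset.powersetCard (i + 1) S, ∑ τ ∈ Finset.powersetCard i P, g τ =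
      ∑ τ ∈ Finset.powersetCard i S,
        ∑ _P ∈ (Finset.powersetCard (i + 1) S).filter (τ ⊆ ·), g τ := by
    refine Finset.sum_comm' fun P τ => ?_
    simp only [Finset.mem_powersetCard, Finset.mem_filter]
    exact ⟨fun ⟨hP, hτ⟩ => ⟨⟨hP, hτ.1⟩, hτ.1.trans hP.1, hτ.2⟩,
      fun ⟨⟨hP, hτP⟩, hτ⟩ => ⟨hP, hτP, hτ.2⟩⟩
  rw [hcomm]
  refine Finset.sum_eq_zero fun τ hτ => ?_
  obtain ⟨hτS, hτcard⟩ := Finset.mem_powersetCard.mp hτ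
  rw [Finset.sum_const, card_filter_subset_powersetCard hτS (by omega), hS, hτcard,
    Nat.add_sub_cancel_left, Nat.add_sub_cancel_left, Nat.choose_one_right, two_nsmul,
    CharTwo.add_self_eq_zero]

variable [DecidableEq V] {K C : Finset V}

lemma sum_indicator_flower {S : Finset V} (hCS : C ⊆ S) :
    ∑ τ ∈ Finset.powersetCard (C.card + 1) S, (Flower K C).indicator (1 : Finset V → ZMod 2) τ =
      (((S ∩ K) \ C).card : ZMod 2) := by
  have himage : (Finset.powersetCard (C.card + 1) S).filter (· ∈ Flower K C) =
      ((S ∩ K) \ C).image (insert · C) := by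
    ext τ
    rw [Finset.mem_filter]
    simp only [Finset.mem_powersetCard, Finset.mem_image, Finset.mem_sdiff, Finset.mem_inter,
      Flower, Set.mem_ofPred_eq]
    constructor
    · rintro ⟨⟨hτS, -⟩, w, ⟨hwK, hwC⟩, rfl⟩
      exact ⟨w, ⟨⟨hτS (Finset.mem_insert_self w C), hwK⟩, hwC⟩, rfl⟩
    · rintro ⟨w, ⟨⟨hwS, hwK⟩, hwC⟩, rfl⟩
      exact ⟨⟨Finset.insert_subset hwS hCS, Finset.card_insert_of_notMem hwC⟩, w, ⟨hwK, hwC⟩, rfl⟩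
  simp only [Set.indicator_apply, Pi.one_apply, Finset.sum_boole, himage]
  rw [Finset.card_image_of_injOn fun w hw w' hw' => ?_]
  exact Finset.insert_inj_on C (Finset.mem_sdiff.mp hw).2 (Finset.mem_sdiff.mp hw').2

lemma flowerCochain_mem_cocycles (hG : IsPureComplex G k) (hF : IsIsolatedFlower G k K C) :
    flowerCochain G C.card K C ∈ cocycles G C.card := by
  refine LinearMap.mem_ker.mpr (funext fun σ => ?_)
  refine (coboundary_apply hG.toIsKComplex ((Flower K C).indicator 1) σ).trans ?_
  by_cases hpetal : ∃ P ∈ Flower K C, P ⊆ σ.1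
  · obtain ⟨P, hP, hPσ⟩ := hpetal
    obtain ⟨K', hK', hσK'⟩ := hG.exists_facet σ.1 σ.2.1 (by rw [σ.2.2]; omega)
    obtain rfl := hF.eq_of_petal_subset P hP K' hK' (hPσ.trans hσK')
    obtain ⟨w, -, rfl⟩ := hP
    have hCσ : C ⊆ σ.1 := (Finset.subset_insert w C).trans hPσ
    have htwo : C.card + 1 + 1 - C.card = 2 := by omega
    rw [sum_indicator_flower hCσ, Finset.inter_eq_left.mpr hσK', Finset.card_sdiff_of_subset hCσ,
      σ.2.2, htwo]
    rfl
  · refine Finset.sum_eq_zero fun τ hτ => Set.indicator_of_notMem (fun hτF => hpetal ?_) _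
    exact ⟨τ, hτF, (Finset.mem_powersetCard.mp hτ).1⟩

/-- A coboundary vanishes in total on the faces of a shell, whereas the flower cochain, a cocycle,
meets the shell in a single petal. -/
theorem not_cohomConnected_of_isMjStar (hG : IsPureComplex G k) (hj : 1 ≤ j) {w a : V}
    (hM : IsMjStar G k j K C w a) : ¬ CohomConnected G j := by
  intro hconn
  obtain ⟨⟨hK, -, rfl, hCK, hpetals⟩, hw, haK, hScard, hS⟩ := hM
  set S := insert a (insert w C)
  have hcob := mem_coboundaries_of_subsingleton_cohomology (hconn.2 _ hj le_rfl)
    (flowerCochain_mem_cocycles hG ⟨hK, hCK, hpetals⟩)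
  obtain ⟨i, hi⟩ : ∃ i, C.card = i + 1 := ⟨C.card - 1, by omega⟩
  have hSK : (S ∩ K) \ C = {w} := by
    obtain ⟨hwK, hwC⟩ := Finset.mem_sdiff.mp hw
    rw [Finset.insert_inter_of_notMem haK, Finset.inter_eq_left.mpr
      (Finset.insert_subset hwK hCK), Finset.insert_sdiff_of_notMem _ hwC, Finset.sdiff_self]
    rfl
  have hsum : ∑ τ ∈ Finset.powersetCard (C.card + 1) S,
      (Flower K C).indicator (1 : Finset V → ZMod 2) τ = 1 := by
    rw [sum_indicator_flower fun x hx => Finset.mem_insert_of_mem (Finset.mem_insert_of_mem hx),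
      hSK, Finset.card_singleton, Nat.cast_one]
  rw [hi] at hcob hsum hS hScard
  obtain ⟨g, hg⟩ := hcob
  have hface : ∀ P ∈ Finset.powersetCard (i + 1 + 1) S, (Flower K C).indicator 1 P =
      ∑ τ ∈ Finset.powersetCard (i + 1) P, if h : IsSimplex G i τ then g ⟨τ, h⟩ else 0 := by
    intro P hP
    obtain ⟨hPS, hPcard⟩ := Finset.mem_powersetCard.mp hP
    exact (congrFun hg ⟨P, hS P hPS hPcard, hPcard⟩).symm
  rw [Finset.sum_congr rfl hface, sum_faces_sum_faces_eq_zero hScard] at hsum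
  exact zero_ne_one hsum

lemma IsIsolatedFlower.isSimplex_insert (hG : IsKComplex G k) (hF : IsIsolatedFlower G k K C)
    {w : V} (hw : w ∈ K \ C) : IsSimplex G C.card (insert w C) := by
  obtain ⟨hwK, hwC⟩ := Finset.mem_sdiff.mp hw
  exact ⟨hG.down K hF.isSimplex.1 _ (Finset.insert_subset hwK hF.subset)
    (Finset.insert_nonempty w C), Finset.card_insert_of_notMem hwC⟩

variable {𝒦 : Finset (Finset V)} {c : Finset V → Finset V}

lemma linearIndependent_flowerCochain (hG : IsKComplex G k) (hik : i ≤ k)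
    (hc : ∀ K ∈ 𝒦, (c K).card = i) (hF : ∀ K ∈ 𝒦, IsIsolatedFlower G k K (c K)) :
    LinearIndependent (ZMod 2) fun K : 𝒦 => flowerCochain G i K (c K) := by
  have hpetal (K : 𝒦) : ∃ P ∈ Flower K.1 (c K), IsSimplex G i P := by
    have hlt : (c K).card < K.1.card := by rw [hc K K.2, (hF K K.2).isSimplex.2]; omega
    obtain ⟨w, hwK, hwC⟩ := Finset.exists_mem_notMem_of_card_lt_card hlt
    have hw := Finset.mem_sdiff.mpr ⟨hwK, hwC⟩
    exact ⟨_, ⟨w, hw, rfl⟩, hc K K.2 ▸ (hF K K.2).isSimplex_insert hG hw⟩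
  choose P hPF hP using hpetal
  refine LinearIndependent.of_pairwise_dual_eq_zero_one _
    (fun K => LinearMap.proj ⟨P K, hP K⟩) (fun K K' hne => ?_) fun K => ?_
  · refine Set.indicator_of_notMem (fun hmem => hne (Subtype.ext ?_)) _
    have hPK : P K ⊆ K.1 := by
      obtain ⟨w, hw, heq⟩ := hPF K
      exact heq ▸ Finset.insert_subset (Finset.mem_sdiff.mp hw).1 (hF K K.2).subset
    exact (hF K' K'.2).eq_of_petal_subset _ hmem K (hF K K.2).isSimplex hPK
  · exact Set.indicator_of_mem (hPF K) _

theorem not_cohomConnected_of_many_flowers [Fintype V] (hG : IsPureComplex G k) (hij : i ≤ j)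
    (hik : i ≤ k) (hc : ∀ K ∈ 𝒦, (c K).card = i) (hF : ∀ K ∈ 𝒦, IsIsolatedFlower G k K (c K))
    (hcard : (Fintype.card V).choose i < 𝒦.card) : ¬ CohomConnected G j := by
  intro hconn
  let f (K : 𝒦) : cocycles G i :=
    ⟨flowerCochain G i K (c K), hc K K.2 ▸ flowerCochain_mem_cocycles hG (hF K K.2)⟩
  have hf : LinearIndependent (ZMod 2) f :=
    .of_comp (cocycles G i).subtype (linearIndependent_flowerCochain hG.toIsKComplex hik hc hF)
  have hle := hf.fintype_card_le_finrank
  rw [Fintype.card_coe] at hle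
  exact absurd (hle.trans (finrank_cocycles_le_choose hconn hij)) (not_le.mpr hcard)

end Cohomology

/-! ### The random complex and its isolated flowers -/

section RandomComplex

variable {k n i j : ℕ} {t : Finset (Fin n) → ℝ} {p a b : ℝ} {K K₁ K₂ C C₁ C₂ : Finset (Fin n)}

lemma isSimplex_complexAt_of_le (hK : K.card = k + 1) (htK : t K ≤ p) :
    IsSimplex (complexAt k n t p) k K :=
  ⟨.inr ⟨Finset.card_pos.mp (by omega), K, hK, htK, subset_rfl⟩, hK⟩

lemma isSimplex_complexAt_iff (hk : 1 ≤ k) :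
    IsSimplex (complexAt k n t p) k K ↔ K.card = k + 1 ∧ t K ≤ p := by
  refine ⟨?_, fun ⟨hK, htK⟩ => isSimplex_complexAt_of_le hK htK⟩
  rintro ⟨⟨v, rfl⟩ | ⟨-, K', hK', htK', hKK'⟩, hK⟩
  · rw [Finset.card_singleton] at hK
    omega
  · exact ⟨hK, Finset.eq_of_subset_of_card_le hKK' (by omega) ▸ htK'⟩

lemma isPureComplex_complexAt (k n : ℕ) (t : Finset (Fin n) → ℝ) (p : ℝ) :
    IsPureComplex (complexAt k n t p) k where
  down := by
    rintro A (⟨v, rfl⟩ | ⟨-, K, hK, htK, hAK⟩) B hBA hB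
    · exact .inl ⟨v, hB.subset_singleton_iff.mp hBA⟩
    · exact .inr ⟨hB, K, hK, htK, hBA.trans hAK⟩
  singletons v := .inl ⟨v, rfl⟩
  dim := by
    rintro A (⟨v, rfl⟩ | ⟨-, K, hK, -, hAK⟩)
    · rw [Finset.card_singleton]
      omega
    · exact hK ▸ Finset.card_le_card hAK
  exists_facet := by
    rintro A (⟨v, rfl⟩ | ⟨-, K, hK, htK, hAK⟩) hA
    · rw [Finset.card_singleton] at hA
      omega
    · exact ⟨K, isSimplex_complexAt_of_le hK htK, hAK⟩

lemma not_cohomConnected_complexAt_of_isolated_vertex (hn : 2 ≤ n) {v : Fin n}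
    (hv : ∀ K : Finset (Fin n), K.card = k + 1 → v ∈ K → p < t K) :
    ¬ CohomConnected (complexAt k n t p) j := by
  have := Fin.nontrivial_iff_two_le.mpr hn
  refine not_cohomConnected_of_isolated_vertex (v := v)
    (isPureComplex_complexAt k n t p).toIsKComplex ?_
  rintro A (⟨x, rfl⟩ | ⟨-, K, hK, htK, hAK⟩) hvA
  · rw [Finset.mem_singleton.mp hvA]
  · exact absurd htK (not_le.mpr (hv K hK (hAK hvA)))

/-- The event that `K` is born by time `a` and the flower `F(K,C)` stays isolated up to time
`b`. -/
def isolatedOn (k : ℕ) (a b : ℝ) (K C : Finset (Fin n)) : Set (Finset (Fin n) → ℝ) :=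
  {t | t K ≤ a ∧ ∀ K' ∈ flowerNeighbours k K C, b < t K'}

lemma isIsolatedFlower_complexAt_iff (hk : 1 ≤ k) (hK : K.card = k + 1) (hCK : C ⊆ K) :
    IsIsolatedFlower (complexAt k n t p) k K C ↔ t ∈ isolatedOn k p p K C := by
  refine ⟨fun h => ⟨((isSimplex_complexAt_iff hk).mp h.isSimplex).2, fun K' hK' => ?_⟩,
    fun ⟨htK, hnbr⟩ => ⟨isSimplex_complexAt_of_le hK htK, hCK, ?_⟩⟩
  · obtain ⟨hne, hmem⟩ := Finset.mem_erase.mp hK'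
    obtain ⟨hK'card, hCK', w, hw, hwK'⟩ := mem_petalSupersets.mp hmem
    by_contra! htK'
    exact hne (h.eq_of_petal_subset _ ⟨w, hw, rfl⟩ K' (isSimplex_complexAt_of_le hK'card htK')
      (Finset.insert_subset hwK' hCK'))
  · rintro P ⟨w, hw, rfl⟩ K' hK' hPK'
    obtain ⟨hK'card, htK'⟩ := (isSimplex_complexAt_iff hk).mp hK'
    obtain ⟨hwK', hCK'⟩ := Finset.insert_subset_iff.mp hPK'
    by_contra hne
    exact absurd htK' (not_le.mpr (hnbr K' (Finset.mem_erase.mpr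
      ⟨hne, mem_petalSupersets.mpr ⟨hK'card, hCK', w, hw, hwK'⟩⟩)))

lemma isolatedOn_mono {a' b' : ℝ} (ha : a ≤ a') (hb : b' ≤ b) :
    isolatedOn k a b K C ⊆ isolatedOn k a' b' K C :=
  fun _ ⟨htK, hnbr⟩ => ⟨htK.trans ha, fun K' hK' => hb.trans_lt (hnbr K' hK')⟩

lemma isolatedOn_eq (k : ℕ) (a b : ℝ) (K C : Finset (Fin n)) :
    isolatedOn k a b K C =
      {t | (∀ K' ∈ ({K} : Finset _), t K' ≤ a) ∧ ∀ K' ∈ flowerNeighbours k K C, b < t K'} := by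
  simp only [isolatedOn, Finset.mem_singleton, forall_eq]

lemma measurableSet_isolatedOn (k : ℕ) (a b : ℝ) (K C : Finset (Fin n)) :
    MeasurableSet (isolatedOn k a b K C) :=
  isolatedOn_eq k a b K C ▸ measurableSet_forall_le_and_forall_lt _ _ _ _

lemma birthMeasure_real_isolatedOn (ha : a ∈ Set.Icc 0 1) (hb : b ∈ Set.Icc 0 1)
    (hK : K.card = k + 1) (hCK : C ⊆ K) (hC : C.card ≤ k) :
    (birthMeasure n).real (isolatedOn k a b K C) = a * (1 - b) ^ (flowerDegree n k C.card - 1) := by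
  have hdisj : Disjoint {K} (flowerNeighbours k K C) :=
    Finset.disjoint_singleton_left.mpr (Finset.notMem_erase K _)
  rw [isolatedOn_eq, birthMeasure_real_forall_le_and_forall_lt hdisj ha hb, Finset.card_singleton,
    pow_one, card_flowerNeighbours hK hCK hC, Fintype.card_fin]

lemma disjoint_isolatedOn (hab : a ≤ b) (h : K₂ ∈ flowerNeighbours k K₁ C₁) :
    Disjoint (isolatedOn k a b K₁ C₁) (isolatedOn k a b K₂ C₂) :=
  Set.disjoint_left.mpr fun _ h₁ h₂ => (h₂.1.trans hab).not_gt (h₁.2 K₂ h)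

lemma birthMeasure_real_isolatedOn_inter_le_of_notMem (ha : a ∈ Set.Icc 0 1) (hb : b ∈ Set.Ico 0 1)
    (hK₁ : K₁.card = k + 1) (hK₂ : K₂.card = k + 1) (hne : K₁ ≠ K₂) (hCK₁ : C₁ ⊆ K₁)
    (hCK₂ : C₂ ⊆ K₂) (hik : i < k) (hC₁ : C₁.card = i) (hC₂ : C₂.card = i)
    (h₁₂ : K₂ ∉ flowerNeighbours k K₁ C₁) (h₂₁ : K₁ ∉ flowerNeighbours k K₂ C₂) :
    (birthMeasure n).real (isolatedOn k a b K₁ C₁ ∩ isolatedOn k a b K₂ C₂) ≤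
      ((1 - b) ^ ((k + 1) ^ 2 * n ^ (k - i - 1)))⁻¹ *
        (a * (1 - b) ^ (flowerDegree n k i - 1)) ^ 2 := by
  have h1b : 0 < 1 - b := sub_pos.mpr hb.2
  have hinter : isolatedOn k a b K₁ C₁ ∩ isolatedOn k a b K₂ C₂ =
      {t | (∀ K ∈ ({K₁, K₂} : Finset _), t K ≤ a) ∧
        ∀ K ∈ flowerNeighbours k K₁ C₁ ∪ flowerNeighbours k K₂ C₂, b < t K} := by
    ext t
    simp only [isolatedOn, Set.mem_inter_iff, Set.mem_ofPred_eq, Finset.mem_insert,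
      Finset.mem_singleton, Finset.forall_mem_union, forall_eq_or_imp, forall_eq]
    tauto
  have hdisj : Disjoint {K₁, K₂} (flowerNeighbours k K₁ C₁ ∪ flowerNeighbours k K₂ C₂) := by
    simp only [Finset.disjoint_insert_left, Finset.disjoint_singleton_left, Finset.mem_union,
      not_or]
    exact ⟨⟨Finset.notMem_erase K₁ _, h₂₁⟩, h₁₂, Finset.notMem_erase K₂ _⟩
  have hunion := Finset.card_union_add_card_inter (flowerNeighbours k K₁ C₁)
    (flowerNeighbours k K₂ C₂)
  rw [card_flowerNeighbours hK₁ hCK₁ (by omega), card_flowerNeighbours hK₂ hCK₂ (by omega), hC₁,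
    hC₂, Fintype.card_fin] at hunion
  have hoverlap := card_flowerNeighbours_inter_le hik hK₁ hK₂ hne hCK₂ hC₁ hC₂ h₁₂
  rw [Fintype.card_fin] at hoverlap
  rw [hinter, birthMeasure_real_forall_le_and_forall_lt hdisj ha (Set.Ico_subset_Icc_self hb),
    Finset.card_pair hne, mul_pow, mul_left_comm]
  refine mul_le_mul_of_nonneg_left ?_ (sq_nonneg a)
  rw [le_inv_mul_iff₀ (by positivity), ← pow_add, ← pow_mul]
  exact pow_le_pow_of_le_one h1b.le (by linarith [hb.1]) (by omega)

lemma birthMeasure_real_isolatedOn_inter_le (ha : 0 ≤ a) (hab : a ≤ b) (hb : b < 1)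
    (hK₁ : K₁.card = k + 1) (hK₂ : K₂.card = k + 1) (hne : K₁ ≠ K₂) (hCK₁ : C₁ ⊆ K₁)
    (hCK₂ : C₂ ⊆ K₂) (hik : i < k) (hC₁ : C₁.card = i) (hC₂ : C₂.card = i) :
    (birthMeasure n).real (isolatedOn k a b K₁ C₁ ∩ isolatedOn k a b K₂ C₂) ≤
      ((1 - b) ^ ((k + 1) ^ 2 * n ^ (k - i - 1)))⁻¹ *
        (a * (1 - b) ^ (flowerDegree n k i - 1)) ^ 2 := by
  have : 0 < 1 - b := sub_pos.mpr hb
  by_cases h₁₂ : K₂ ∈ flowerNeighbours k K₁ C₁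
  · rw [(disjoint_isolatedOn hab h₁₂).inter_eq, measureReal_empty]
    positivity
  by_cases h₂₁ : K₁ ∈ flowerNeighbours k K₂ C₂
  · rw [(disjoint_isolatedOn hab h₂₁).symm.inter_eq, measureReal_empty]
    positivity
  exact birthMeasure_real_isolatedOn_inter_le_of_notMem ⟨ha, (hab.trans_lt hb).le⟩
    ⟨ha.trans hab, hb⟩ hK₁ hK₂ hne hCK₁ hCK₂ hik hC₁ hC₂ h₁₂ h₂₁

/-- The `(k+1)`-sets `K` born by time `a` whose flower around the chosen centre of size `i` stays
isolated up to time `b`. -/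
noncomputable def isolatedFlowers (k i : ℕ) (a b : ℝ) (t : Finset (Fin n) → ℝ) :
    Finset (Finset (Fin n)) :=
  (Finset.powersetCard (k + 1) Finset.univ).filter fun K => t ∈ isolatedOn k a b K (centre i K)

/-- The expected number of `isolatedFlowers`. -/
noncomputable def expectedFlowers (k i : ℕ) (a b : ℝ) (n : ℕ) : ℝ :=
  n.choose (k + 1) * (a * (1 - b) ^ (flowerDegree n k i - 1))

lemma mem_isolatedFlowers :
    K ∈ isolatedFlowers k i a b t ↔ K.card = k + 1 ∧ t ∈ isolatedOn k a b K (centre i K) := by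
  rw [isolatedFlowers, Finset.mem_filter, Finset.mem_powersetCard_univ]

lemma birthMeasure_real_card_isolatedFlowers_le (hik : i < k) (hn : k + 1 ≤ n) (ha : 0 < a)
    (hab : a ≤ b) (hb : b < 1) :
    (birthMeasure n).real {t | ((isolatedFlowers k i a b t).card : ℝ) ≤
        expectedFlowers k i a b n / 2} ≤
      4 * (1 / expectedFlowers k i a b n +
        (((1 - b) ^ ((k + 1) ^ 2 * n ^ (k - i - 1)))⁻¹ - 1)) := by
  have h1b : 0 < 1 - b := sub_pos.mpr hb
  have hchoose := Nat.choose_pos hn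
  have hI : (Finset.powersetCard (k + 1) (Finset.univ : Finset (Fin n))).card =
      n.choose (k + 1) := by rw [Finset.card_powersetCard, Finset.card_univ, Fintype.card_fin]
  have hcentre : ∀ K ∈ Finset.powersetCard (k + 1) (Finset.univ : Finset (Fin n)),
      K.card = k + 1 ∧ centre i K ⊆ K ∧ (centre i K).card = i := by
    intro K hK
    have hKcard := Finset.mem_powersetCard_univ.mp hK
    exact ⟨hKcard, centre_subset (by omega), card_centre (by omega)⟩
  have hη : 0 ≤ ((1 - b) ^ ((k + 1) ^ 2 * n ^ (k - i - 1)))⁻¹ - 1 :=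
    sub_nonneg.mpr ((one_le_inv₀ (by positivity)).mpr (pow_le_one₀ h1b.le (by linarith)))
  rw [expectedFlowers, ← hI]
  refine measureReal_card_le_half_le (fun K => measurableSet_isolatedOn k a b K (centre i K)) hη
    (fun K hK => ?_) (fun K₁ hK₁ K₂ hK₂ hne => ?_) (by rw [hI]; positivity)
  · obtain ⟨hKcard, hsub, hcard⟩ := hcentre K hK
    rw [birthMeasure_real_isolatedOn ⟨ha.le, by linarith⟩ ⟨by linarith, hb.le⟩ hKcard hsub
      (by omega), hcard]
  · obtain ⟨hcard₁, hsub₁, hc₁⟩ := hcentre K₁ hK₁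
    obtain ⟨hcard₂, hsub₂, hc₂⟩ := hcentre K₂ hK₂
    rw [add_sub_cancel]
    exact birthMeasure_real_isolatedOn_inter_le ha.le hab hb hcard₁ hcard₂ hne hsub₁ hsub₂ hik hc₁
      hc₂

lemma isIsolatedFlower_of_mem_isolatedFlowers (hik : i < k) (hap : a ≤ p) (hpb : p ≤ b)
    (hK : K ∈ isolatedFlowers k i a b t) :
    IsIsolatedFlower (complexAt k n t p) k K (centre i K) := by
  obtain ⟨hKcard, ht⟩ := mem_isolatedFlowers.mp hK
  exact (isIsolatedFlower_complexAt_iff (by omega) hKcard (centre_subset (by omega))).mpr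
    (isolatedOn_mono hap hpb ht)

lemma not_cohomConnected_complexAt_of_isolatedFlowers (hij : i ≤ j) (hik : i < k)
    (hcard : n.choose i < (isolatedFlowers k i a b t).card) (hap : a ≤ p) (hpb : p ≤ b) :
    ¬ CohomConnected (complexAt k n t p) j := by
  refine not_cohomConnected_of_many_flowers (isPureComplex_complexAt k n t p) hij hik.le
    (fun K hK => card_centre ?_)
    (fun K hK => isIsolatedFlower_of_mem_isolatedFlowers hik hap hpb hK)
    (by rwa [Fintype.card_fin])
  have := (mem_isolatedFlowers.mp hK).1
  omega

end RandomComplex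

/-! ### Isolated vertices, late flowers and shells -/

section RareEvents

variable {k n j m : ℕ} {s : ℝ}

lemma birthMeasure_real_exists_mem_le_le (v : Fin n) (hs : s ∈ Set.Icc 0 1) :
    (birthMeasure n).real {t | ∃ K : Finset (Fin n), K.card = k + 1 ∧ v ∈ K ∧ t K ≤ s} ≤
      (n : ℝ) ^ k * s := by
  set F := (Finset.univ.powersetCard (k + 1)).filter ({v} ⊆ · : Finset (Fin n) → Prop) with hF
  have hFcard : F.card ≤ n ^ k := by
    have hle := card_filter_subset_powersetCard_univ_le (k := k) (D := {v}) (e := 1) le_rfl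
      (by omega)
    rwa [Fintype.card_fin, Nat.add_sub_cancel] at hle
  calc (birthMeasure n).real {t | ∃ K : Finset (Fin n), K.card = k + 1 ∧ v ∈ K ∧ t K ≤ s}
      = (birthMeasure n).real (⋃ K ∈ F, {t | t K ≤ s}) := by
        congr 1
        ext t
        simp [hF, and_assoc]
    _ ≤ ∑ K ∈ F, (birthMeasure n).real {t | t K ≤ s} := measureReal_biUnion_finset_le _ _
    _ = F.card * s := by
        rw [Finset.sum_congr rfl fun K _ => birthMeasure_real_le K hs, Finset.sum_const,
          nsmul_eq_mul]
    _ ≤ (n : ℝ) ^ k * s := mul_le_mul_of_nonneg_right (by exact_mod_cast hFcard) hs.1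

lemma birthMeasure_real_exists_subset_le {A : Finset (Fin n) → Finset (Fin n) →
    Set (Finset (Fin n) → ℝ)} {x : ℝ} (hx : 0 ≤ x)
    (hA : ∀ K C, K.card = k + 1 → C ⊆ K → C.card = j → (birthMeasure n).real (A K C) ≤ x) :
    (birthMeasure n).real {t | ∃ K C, K.card = k + 1 ∧ C ⊆ K ∧ C.card = j ∧ t ∈ A K C} ≤
      (n : ℝ) ^ (k + 1) * 2 ^ (k + 1) * x := by
  have hinner : ∀ K ∈ (Finset.univ : Finset (Fin n)).powersetCard (k + 1),
      (birthMeasure n).real (⋃ C ∈ K.powersetCard j, A K C) ≤ 2 ^ (k + 1) * x := by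
    intro K hK
    have hKcard := Finset.mem_powersetCard_univ.mp hK
    calc (birthMeasure n).real (⋃ C ∈ K.powersetCard j, A K C)
        ≤ ∑ C ∈ K.powersetCard j, (birthMeasure n).real (A K C) :=
          measureReal_biUnion_finset_le _ _
      _ ≤ ∑ _C ∈ K.powersetCard j, x := Finset.sum_le_sum fun C hC =>
          hA K C hKcard (Finset.mem_powersetCard.mp hC).1 (Finset.mem_powersetCard.mp hC).2
      _ = (k + 1).choose j * x := by
          rw [Finset.sum_const, Finset.card_powersetCard, hKcard, nsmul_eq_mul]
      _ ≤ 2 ^ (k + 1) * x :=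
          mul_le_mul_of_nonneg_right (by exact_mod_cast Nat.choose_le_two_pow (k + 1) j) hx
  calc (birthMeasure n).real {t | ∃ K C, K.card = k + 1 ∧ C ⊆ K ∧ C.card = j ∧ t ∈ A K C}
      = (birthMeasure n).real (⋃ K ∈ (Finset.univ : Finset (Fin n)).powersetCard (k + 1),
          ⋃ C ∈ K.powersetCard j, A K C) := by
        congr 1
        ext t
        simp only [Set.mem_ofPred_eq, Set.mem_iUnion, Finset.mem_powersetCard, Finset.subset_univ,
          true_and, exists_prop, and_assoc, exists_and_left]
    _ ≤ ∑ K ∈ (Finset.univ : Finset (Fin n)).powersetCard (k + 1),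
          (birthMeasure n).real (⋃ C ∈ K.powersetCard j, A K C) :=
        measureReal_biUnion_finset_le _ _
    _ ≤ ∑ K ∈ (Finset.univ : Finset (Fin n)).powersetCard (k + 1), 2 ^ (k + 1) * x :=
        Finset.sum_le_sum hinner
    _ = n.choose (k + 1) * (2 ^ (k + 1) * x) := by
        rw [Finset.sum_const, Finset.card_powersetCard, Finset.card_univ, Fintype.card_fin,
          nsmul_eq_mul]
    _ ≤ (n : ℝ) ^ (k + 1) * 2 ^ (k + 1) * x := by
        rw [mul_assoc]
        exact mul_le_mul_of_nonneg_right (by exact_mod_cast Nat.choose_le_pow n (k + 1))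
          (by positivity)

/-- Some flower with centre of size `j` is still isolated when its simplex is born after time
`s`. -/
def HasLateFlower (k j : ℕ) (s : ℝ) (t : Finset (Fin n) → ℝ) : Prop :=
  ∃ K C, K.card = k + 1 ∧ C ⊆ K ∧ C.card = j ∧ t ∈ strictMinAbove (petalSupersets k K C) s K

/-- By exchangeability `K` is the first of the simplices containing its petals with probability
one over their number, which is what beats the union bound over `K` and `C`. -/
lemma birthMeasure_real_hasLateFlower_le (hjk : j ≤ k) (hs : s ∈ Set.Icc 0 1) :
    (birthMeasure n).real {t | HasLateFlower k j s t} ≤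
      (n : ℝ) ^ (k + 1) * 2 ^ (k + 1) *
        ((1 - s) ^ flowerDegree n k j / flowerDegree n k j) := by
  have h1s : 0 ≤ 1 - s := sub_nonneg.mpr hs.2
  refine birthMeasure_real_exists_subset_le (by positivity) fun K C hK hCK hC => ?_
  have hle := birthMeasure_real_strictMinAbove_le hs
    (self_mem_petalSupersets hK hCK (hC.trans_le hjk))
  rwa [card_petalSupersets hK hCK, Fintype.card_fin, hC] at hle

/-- By time `s` every `j`-simplex `P` of every possible `k`-simplex `K` lies in a `j`-shell whose
other simplices are present and whose apex avoids `K`. -/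
def HasShells (k j : ℕ) (s : ℝ) (t : Finset (Fin n) → ℝ) : Prop :=
  ∀ K P : Finset (Fin n), K.card = k + 1 → P ⊆ K → P.card = j + 1 → ∃ a ∉ K, ∀ x ∈ P,
    ∃ K' : Finset (Fin n), K'.card = k + 1 ∧ insert a (P.erase x) ⊆ K' ∧ t K' ≤ s

section ShellExtensions

variable {P V₁ V₂ : Finset (Fin n)} {r : ℕ}

/-- The sets `{a} ∪ (P \ {φ a}) ∪ R`, for `a ∈ V₁` and `R` an `r`-subset of `V₂`, which extend the
faces `{a} ∪ (P \ {φ a})` of the shells over `P`. -/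
noncomputable def shellExtensions (P V₁ V₂ : Finset (Fin n)) (r : ℕ) (φ : V₁ → Fin n) :
    Finset (Finset (Fin n)) :=
  (Finset.univ ×ˢ V₂.powersetCard r).image fun z => insert z.1.1 (P.erase (φ z.1)) ∪ z.2

lemma card_shellExtensions (h₁ : Disjoint V₁ P) (h₂ : Disjoint V₂ P) (h₁₂ : Disjoint V₁ V₂)
    (φ : V₁ → Fin n) :
    (shellExtensions P V₁ V₂ r φ).card = V₁.card * V₂.card.choose r := by
  have htrace₁ (a : V₁) {R : Finset (Fin n)} (hR : R ⊆ V₂) :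
      (insert a.1 (P.erase (φ a)) ∪ R) ∩ V₁ = {a.1} := by
    have := Finset.disjoint_left.mp h₁
    have := Finset.disjoint_left.mp h₁₂
    have := a.2
    grind
  have htrace₂ (a : V₁) {R : Finset (Fin n)} (hR : R ⊆ V₂) :
      (insert a.1 (P.erase (φ a)) ∪ R) ∩ V₂ = R := by
    have := Finset.disjoint_left.mp h₂
    have := Finset.disjoint_left.mp h₁₂
    have := a.2
    grind
  rw [shellExtensions, Finset.card_image_of_injOn, Finset.card_product, Finset.card_powersetCard,
    Finset.card_univ, Fintype.card_coe]
  rintro ⟨a, R⟩ hz ⟨a', R'⟩ hz' heq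
  have hR := (Finset.mem_powersetCard.mp (Finset.mem_product.mp hz).2).1
  have hR' := (Finset.mem_powersetCard.mp (Finset.mem_product.mp hz').2).1
  have ha : a = a' := Subtype.ext <| Finset.singleton_injective <|
    (htrace₁ a hR).symm.trans ((congrArg (· ∩ V₁) heq).trans (htrace₁ a' hR'))
  exact Prod.ext ha <|
    (htrace₂ a hR).symm.trans ((congrArg (· ∩ V₂) heq).trans (htrace₂ a' hR'))

/-- Union bound over the functions `φ` choosing a face of each shell that is missing. -/
lemma birthMeasure_real_forall_exists_forall_lt_le (h₁ : Disjoint V₁ P) (h₂ : Disjoint V₂ P)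
    (h₁₂ : Disjoint V₁ V₂) (hs : s ∈ Set.Icc 0 1) :
    (birthMeasure n).real {t | ∀ a ∈ V₁, ∃ x ∈ P, ∀ R ∈ V₂.powersetCard r,
        s < t (insert a (P.erase x) ∪ R)} ≤
      (P.card * (1 - s) ^ V₂.card.choose r) ^ V₁.card := by
  set Φ := Fintype.piFinset fun _ : V₁ => P with hΦ
  have hcover : {t : Finset (Fin n) → ℝ | ∀ a ∈ V₁, ∃ x ∈ P, ∀ R ∈ V₂.powersetCard r,
      s < t (insert a (P.erase x) ∪ R)} ⊆
      ⋃ φ ∈ Φ, {t | ∀ K ∈ shellExtensions P V₁ V₂ r φ, s < t K} := by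
    intro t ht
    choose φ hφ hlt using fun a : V₁ => ht a.1 a.2
    simp only [Set.mem_iUnion]
    refine ⟨φ, Fintype.mem_piFinset.mpr hφ, fun K hK => ?_⟩
    obtain ⟨⟨a, R⟩, hz, rfl⟩ := Finset.mem_image.mp hK
    exact hlt a R (Finset.mem_product.mp hz).2
  refine (measureReal_mono hcover (measure_ne_top _ _)).trans
    ((measureReal_biUnion_finset_le _ _).trans_eq ?_)
  simp only [birthMeasure_real_forall_lt _ hs, card_shellExtensions h₁ h₂ h₁₂, Finset.sum_const]
  rw [nsmul_eq_mul, hΦ, Fintype.card_piFinset, Finset.prod_const, Finset.card_univ,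
    Fintype.card_coe, mul_pow, ← pow_mul, mul_comm V₁.card, Nat.cast_pow]

end ShellExtensions

lemma birthMeasure_real_not_hasShells_le (hjk : j ≤ k) (hs : s ∈ Set.Icc 0 1)
    (hm : k + 1 + 2 * m ≤ n) :
    (birthMeasure n).real {t | ¬ HasShells k j s t} ≤
      (n : ℝ) ^ (k + 1) * 2 ^ (k + 1) *
        (((j + 1 : ℕ) : ℝ) * (1 - s) ^ m.choose (k - j)) ^ m := by
  have h1s : 0 ≤ 1 - s := sub_nonneg.mpr hs.2
  refine le_trans (measureReal_mono ?_ (measure_ne_top _ _))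
    (birthMeasure_real_exists_subset_le (j := j + 1)
    (A := fun K P => {t | ∀ a ∉ K, ∃ x ∈ P, ∀ K' : Finset (Fin n), K'.card = k + 1 →
      insert a (P.erase x) ⊆ K' → s < t K'}) (by positivity) fun K P hK hPK hP => ?_)
  · intro t ht
    simp only [HasShells, Set.mem_ofPred_eq] at ht
    push Not at ht
    exact ht
  obtain ⟨W, hW, hWcard⟩ : ∃ W ⊆ Kᶜ, W.card = m + m :=
    Finset.exists_subset_card_eq (by rw [Finset.card_compl, Fintype.card_fin, hK]; omega)
  obtain ⟨V₁, hV₁, hV₁card⟩ : ∃ V₁ ⊆ W, V₁.card = m := Finset.exists_subset_card_eq (by omega)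
  have hV₂card : (W \ V₁).card = m := by rw [Finset.card_sdiff_of_subset hV₁]; omega
  have h₁ : Disjoint V₁ K := disjoint_compl_left.mono_left (hV₁.trans hW)
  have h₂ : Disjoint (W \ V₁) K :=
    disjoint_compl_left.mono_left (Finset.sdiff_subset.trans hW)
  have hle := birthMeasure_real_forall_exists_forall_lt_le (r := k - j) (h₁.mono_right hPK)
    (h₂.mono_right hPK) Finset.disjoint_sdiff hs
  rw [hV₁card, hV₂card, hP] at hle
  refine le_trans (measureReal_mono ?_ (measure_ne_top _ _)) hle
  intro t ht a ha
  have haK := Finset.disjoint_left.mp h₁ ha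
  obtain ⟨x, hx, hlate⟩ := ht a haK
  refine ⟨x, hx, fun R hR => hlate _ ?_ Finset.subset_union_left⟩
  obtain ⟨hRsub, hRcard⟩ := Finset.mem_powersetCard.mp hR
  have hdisj : Disjoint (insert a (P.erase x)) R := by
    refine Finset.disjoint_insert_left.mpr ⟨fun haR => ?_, ?_⟩
    · exact (Finset.mem_sdiff.mp (hRsub haR)).2 ha
    · exact (h₂.mono hRsub ((Finset.erase_subset x P).trans hPK)).symm
  rw [Finset.card_union_of_disjoint hdisj, hRcard, Finset.card_insert_of_notMem fun h =>
    haK (hPK (Finset.mem_of_mem_erase h)), Finset.card_erase_of_mem hx, hP]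
  omega

end RareEvents

/-! ### Asymptotics -/

section Asymptotics

lemma exp_neg_mul_div_one_sub_le_one_sub_pow {b : ℝ} (hb : b < 1) (d : ℕ) :
    Real.exp (-(d * (b / (1 - b)))) ≤ (1 - b) ^ d := by
  have h1b : 0 < 1 - b := sub_pos.mpr hb
  have hbase : Real.exp (-(b / (1 - b))) ≤ 1 - b := by
    rw [Real.exp_neg, inv_le_comm₀ (Real.exp_pos _) h1b]
    calc (1 - b)⁻¹ = b / (1 - b) + 1 := by
          field_simp
          ring
      _ ≤ Real.exp (b / (1 - b)) := Real.add_one_le_exp _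
  rw [← mul_neg, Real.exp_nat_mul]
  exact pow_le_pow_left₀ (Real.exp_pos _).le hbase d

lemma one_sub_pow_le_exp_neg_mul {b : ℝ} (hb : b ≤ 1) (d : ℕ) :
    (1 - b) ^ d ≤ Real.exp (-(d * b)) := by
  rw [← mul_neg, Real.exp_nat_mul]
  exact pow_le_pow_left₀ (sub_nonneg.mpr hb) (Real.one_sub_le_exp_neg b) d

lemma tendsto_one_sub_pow_one {b : ℕ → ℝ} {d : ℕ → ℕ} (hb : ∀ᶠ n in atTop, b n ∈ Set.Icc 0 1)
    (hdb : Tendsto (fun n => d n * b n) atTop (nhds 0)) :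
    Tendsto (fun n => (1 - b n) ^ d n) atTop (nhds 1) := by
  refine tendsto_of_tendsto_of_tendsto_of_le_of_le' (g := fun n => 1 - d n * b n)
    (by simpa only [sub_zero] using hdb.const_sub 1) tendsto_const_nhds ?_ ?_
  · filter_upwards [hb] with n hbn
    have hbernoulli := one_add_mul_le_pow (a := -b n) (by linarith [hbn.2]) (d n)
    rwa [mul_neg, ← sub_eq_add_neg, ← sub_eq_add_neg] at hbernoulli
  · filter_upwards [hb] with n hbn
    exact pow_le_one₀ (sub_nonneg.mpr hbn.2) (by linarith [hbn.1])

lemma pow_sub_mul_pow_succ {i k : ℕ} (x : ℝ) (hik : i ≤ k) :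
    x ^ (k - i) * x ^ (i + 1) = x ^ (k + 1) := by
  rw [← pow_add, ← Nat.add_assoc, Nat.sub_add_cancel hik]

/-- The fourth root of `log n`, a slowly growing scale: its powers are negligible against those
of `n`, while `exp` of its fourth power is `n`. -/
noncomputable def fourthRootLog (n : ℕ) : ℝ := √√(Real.log n)

lemma tendsto_fourthRootLog : Tendsto fourthRootLog atTop atTop :=
  Real.tendsto_sqrt_atTop.comp (Real.tendsto_sqrt_atTop.comp
    (Real.tendsto_log_atTop.comp tendsto_natCast_atTop_atTop))

lemma exp_fourthRootLog_pow_four {n : ℕ} (hn : 1 ≤ n) : Real.exp (fourthRootLog n ^ 4) = n := by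
  rw [show 4 = 2 * 2 from rfl, pow_mul, fourthRootLog, Real.sq_sqrt (Real.sqrt_nonneg _),
    Real.sq_sqrt (Real.log_natCast_nonneg n), Real.exp_log (by exact_mod_cast hn)]

lemma tendsto_fourthRootLog_pow_div_pow (m : ℕ) {r : ℕ} (hr : 1 ≤ r) :
    Tendsto (fun n : ℕ => fourthRootLog n ^ m / (n : ℝ) ^ r) atTop (nhds 0) := by
  refine squeeze_zero' ?_ ?_
    ((Real.tendsto_pow_mul_exp_neg_atTop_nhds_zero m).comp tendsto_fourthRootLog)
  · exact .of_forall fun n => div_nonneg (pow_nonneg (Real.sqrt_nonneg _) _) (by positivity)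
  · filter_upwards [tendsto_fourthRootLog.eventually_ge_atTop 1, eventually_ge_atTop 1]
      with n hu hn
    have hexp : Real.exp (fourthRootLog n) ≤ (n : ℝ) ^ r := by
      calc Real.exp (fourthRootLog n) ≤ Real.exp (fourthRootLog n ^ 4) :=
            Real.exp_le_exp.mpr (le_self_pow₀ hu (by norm_num))
        _ = n := exp_fourthRootLog_pow_four hn
        _ ≤ (n : ℝ) ^ r := le_self_pow₀ (by exact_mod_cast hn) (by omega)
    rw [Function.comp_apply, Real.exp_neg, ← div_eq_mul_inv]
    gcongr

/-- The time `(log n)^{3/4} / n ^ r`, at which one range of `p` ends and the next one begins. -/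
noncomputable def cutoff (r n : ℕ) : ℝ := fourthRootLog n ^ 3 / (n : ℝ) ^ r

lemma tendsto_cutoff {r : ℕ} (hr : 1 ≤ r) : Tendsto (cutoff r) atTop (nhds 0) :=
  tendsto_fourthRootLog_pow_div_pow 3 hr

lemma cutoff_pos {r n : ℕ} (hu : 0 < fourthRootLog n) (hn : 1 ≤ n) : 0 < cutoff r n :=
  div_pos (pow_pos hu 3) (by positivity)

lemma eventually_cutoff_mem_Ioc {r : ℕ} (hr : 1 ≤ r) {ε : ℝ} (hε : 0 < ε) :
    ∀ᶠ n in atTop, cutoff r n ∈ Set.Ioc 0 ε := by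
  filter_upwards [tendsto_fourthRootLog.eventually_gt_atTop 0, eventually_ge_atTop 1,
    (tendsto_cutoff hr).eventually_le_const hε] with n hu hn hle
  exact ⟨cutoff_pos hu hn, hle⟩

lemma cutoff_mul_pow {r m n : ℕ} (hmr : m ≤ r) (hn : 1 ≤ n) :
    cutoff r n * (n : ℝ) ^ m = cutoff (r - m) n := by
  have : (n : ℝ) ≠ 0 := by positivity
  rw [cutoff, cutoff, div_mul_eq_mul_div, div_eq_div_iff (by positivity) (by positivity), mul_assoc,
    ← pow_add, Nat.add_sub_cancel' hmr]

end Asymptotics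

/-! ### Flowers that stay isolated -/

section Windows

variable {k i : ℕ} {a b w : ℕ → ℝ}

lemma holdsWhp_lt_card_isolatedFlowers (hik : i < k)
    (hab : ∀ᶠ n in atTop, 0 < a n ∧ a n ≤ b n)
    (hb : Tendsto (fun n : ℕ => (n : ℝ) ^ (k - i - 1) * b n) atTop (nhds 0))
    (hE : Tendsto (fun n => expectedFlowers k i (a n) (b n) n) atTop atTop)
    (hw : ∀ᶠ n in atTop, 2 * w n ≤ expectedFlowers k i (a n) (b n) n) :
    HoldsWhp birthMeasure fun n t => w n < (isolatedFlowers k i (a n) (b n) t).card := by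
  have hb1 : ∀ᶠ n in atTop, b n ∈ Set.Ico 0 1 := by
    filter_upwards [hab, eventually_ge_atTop 1, hb.eventually_lt_const one_pos]
      with n ⟨ha, hab⟩ hn hlt
    have hb0 := ha.le.trans hab
    refine ⟨hb0, lt_of_le_of_lt ?_ hlt⟩
    exact le_mul_of_one_le_left hb0 (one_le_pow₀ (by exact_mod_cast hn))
  have hpow : Tendsto (fun n => (1 - b n) ^ ((k + 1) ^ 2 * n ^ (k - i - 1))) atTop (nhds 1) := by
    refine tendsto_one_sub_pow_one (hb1.mono fun n h => Set.Ico_subset_Icc_self h) ?_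
    refine ((hb.const_mul (((k : ℝ) + 1) ^ 2)).congr fun n => ?_).trans (by rw [mul_zero])
    push_cast
    ring
  refine .of_le (f := fun n => 4 * (1 / expectedFlowers k i (a n) (b n) n +
    (((1 - b n) ^ ((k + 1) ^ 2 * n ^ (k - i - 1)))⁻¹ - 1))) ?_ ?_
  · have hinv := hE.inv_tendsto_atTop.add ((hpow.inv₀ one_ne_zero).sub_const 1)
    simpa [one_div] using hinv.const_mul 4
  · filter_upwards [hab, hb1, hw, eventually_ge_atTop (k + 1)] with n ⟨ha, hab⟩ hb1 hw hn
    refine le_trans (measureReal_mono ?_ (measure_ne_top _ _))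
      (birthMeasure_real_card_isolatedFlowers_le hik hn ha hab hb1.2)
    intro t ht
    have ht := not_lt.mp ht
    rw [Set.mem_ofPred_eq]
    linarith

lemma mul_le_expectedFlowers {a b y : ℝ} {n : ℕ} (hn : 2 * (k + 1) ≤ n) (ha : 0 ≤ a) (hb : b ≤ 1)
    (hy : y ≤ (1 - b) ^ (flowerDegree n k i - 1)) :
    a * (n : ℝ) ^ (k + 1) * y ≤ 2 ^ (k + 1) * (k + 1).factorial * expectedFlowers k i a b n := by
  have : 0 ≤ 1 - b := sub_nonneg.mpr hb
  calc a * (n : ℝ) ^ (k + 1) * y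
      ≤ a * (n : ℝ) ^ (k + 1) * (1 - b) ^ (flowerDegree n k i - 1) :=
        mul_le_mul_of_nonneg_left hy (by positivity)
    _ ≤ a * (2 ^ (k + 1) * (k + 1).factorial * n.choose (k + 1)) *
          (1 - b) ^ (flowerDegree n k i - 1) := by
        gcongr
        exact pow_le_mul_choose hn
    _ = 2 ^ (k + 1) * (k + 1).factorial * expectedFlowers k i a b n := by
        rw [expectedFlowers]
        ring

lemma exp_le_one_sub_pow_flowerDegree {b : ℝ} {n : ℕ} (hik : i ≤ k) (hn : k + 1 ≤ n) (hb : 0 ≤ b)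
    (hb' : b ≤ 1 / 2) :
    Real.exp (-(2 * (k + 1) * ((n : ℝ) ^ (k - i) * b))) ≤
      (1 - b) ^ (flowerDegree n k i - 1) := by
  refine le_trans (Real.exp_le_exp.mpr (neg_le_neg ?_))
    (exp_neg_mul_div_one_sub_le_one_sub_pow (by linarith) (flowerDegree n k i - 1))
  have hD : ((flowerDegree n k i - 1 : ℕ) : ℝ) ≤ (k + 1) * (n : ℝ) ^ (k - i) := by
    exact_mod_cast (Nat.sub_le _ 1).trans (flowerDegree_le hik hn)
  have hfrac : b / (1 - b) ≤ 2 * b := by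
    rw [div_le_iff₀ (by linarith)]
    nlinarith
  calc ((flowerDegree n k i - 1 : ℕ) : ℝ) * (b / (1 - b))
      ≤ (k + 1) * (n : ℝ) ^ (k - i) * (2 * b) := by
        have : 0 < 1 - b := by linarith
        gcongr
    _ = 2 * (k + 1) * ((n : ℝ) ^ (k - i) * b) := by ring

lemma tendsto_pow_pred_mul_of_le_cutoff {r : ℕ} (hr : 1 ≤ r) (hb0 : ∀ᶠ n in atTop, 0 ≤ b n)
    (hb : ∀ᶠ n in atTop, b n ≤ cutoff r n) :
    Tendsto (fun n : ℕ => (n : ℝ) ^ (r - 1) * b n) atTop (nhds 0) := by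
  refine squeeze_zero' (hb0.mono fun n h => mul_nonneg (by positivity) h) ?_ (tendsto_cutoff le_rfl)
  filter_upwards [hb, eventually_ge_atTop 1] with n hb hn
  calc (n : ℝ) ^ (r - 1) * b n ≤ cutoff r n * (n : ℝ) ^ (r - 1) := by
        rw [mul_comm]
        gcongr
    _ = cutoff 1 n := by rw [cutoff_mul_pow (Nat.sub_le _ 1) hn, Nat.sub_sub_self hr]

lemma holdsWhp_choose_lt_card_isolatedFlowers {c : ℝ} (hik : i < k) (hc : 0 < c)
    (hab : ∀ᶠ n in atTop, 0 < a n ∧ a n ≤ b n) (hb : ∀ᶠ n in atTop, b n ≤ cutoff (k - i) n)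
    (hE : ∀ᶠ n : ℕ in atTop, c * (fourthRootLog n ^ 3 * (n : ℝ) ^ i) ≤
      a n * (n : ℝ) ^ (k + 1) * Real.exp (-(2 * (k + 1) * ((n : ℝ) ^ (k - i) * b n)))) :
    HoldsWhp birthMeasure fun n t => n.choose i < (isolatedFlowers k i (a n) (b n) t).card := by
  set A : ℝ := 2 ^ (k + 1) * (k + 1).factorial
  have hA0 : 0 < A := by positivity
  have hlower : ∀ᶠ n : ℕ in atTop, c / A * fourthRootLog n ^ 3 * (n : ℝ) ^ i ≤
      expectedFlowers k i (a n) (b n) n := by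
    filter_upwards [hab, hb, hE, eventually_ge_atTop (2 * (k + 1)),
      eventually_cutoff_mem_Ioc (Nat.sub_pos_of_lt hik) one_half_pos]
      with n ⟨ha, hab⟩ hb hE hn hcut
    have hbhalf := hb.trans hcut.2
    have hle := hE.trans (mul_le_expectedFlowers hn ha.le (by linarith)
      (exp_le_one_sub_pow_flowerDegree hik.le (by omega) (ha.le.trans hab) hbhalf))
    rw [mul_assoc, div_mul_eq_mul_div, div_le_iff₀ hA0]
    exact hle.trans_eq (mul_comm _ _)
  have hscale : Tendsto (fun n => c / A * fourthRootLog n ^ 3) atTop atTop :=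
    ((tendsto_pow_atTop three_ne_zero).comp tendsto_fourthRootLog).const_mul_atTop (div_pos hc hA0)
  have hpow : ∀ᶠ n : ℕ in atTop, 1 ≤ (n : ℝ) ^ i :=
    (eventually_ge_atTop 1).mono fun n hn => one_le_pow₀ (by exact_mod_cast hn)
  have hwhp := holdsWhp_lt_card_isolatedFlowers (w := fun n => n.choose i) hik hab ?_ ?_ ?_
  · exact_mod_cast hwhp
  · exact tendsto_pow_pred_mul_of_le_cutoff (Nat.sub_pos_of_lt hik)
      (hab.mono fun n ⟨ha, hab⟩ => ha.le.trans hab) hb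
  · refine tendsto_atTop_mono' _ ?_ hscale
    filter_upwards [hlower, hpow, hscale.eventually_ge_atTop 0] with n hlower hpow hscale
    exact (le_mul_of_one_le_right hscale hpow).trans hlower
  · filter_upwards [hlower, hscale.eventually_ge_atTop 2] with n hlower hscale
    refine le_trans ?_ hlower
    gcongr
    exact_mod_cast Nat.choose_le_pow n i

lemma holdsWhp_isolatedFlowers_cutoff_one_div (hik : i < k) :
    HoldsWhp birthMeasure fun n t => n.choose i <
      (isolatedFlowers k i (cutoff (k - i + 1) n) (1 / (n : ℝ) ^ (k - i)) t).card := by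
  refine holdsWhp_choose_lt_card_isolatedFlowers hik (Real.exp_pos (-(2 * (k + 1)))) ?_ ?_ ?_
  · filter_upwards [eventually_cutoff_mem_Ioc le_rfl one_pos, eventually_ge_atTop 1,
      tendsto_fourthRootLog.eventually_gt_atTop 0] with n hcut hn hu
    refine ⟨cutoff_pos hu hn, ?_⟩
    rw [le_div_iff₀ (by positivity), cutoff_mul_pow (Nat.le_succ _) hn,
      Nat.succ_sub (le_refl _), Nat.sub_self]
    exact hcut.2
  · filter_upwards [tendsto_fourthRootLog.eventually_ge_atTop 1] with n hu
    exact div_le_div_of_nonneg_right (one_le_pow₀ hu) (by positivity)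
  · filter_upwards [eventually_ge_atTop 1] with n hn
    have hn0 : (n : ℝ) ≠ 0 := by positivity
    have hsplit : (n : ℝ) ^ (k + 1) = n ^ (k - i + 1) * n ^ i := by
      rw [← pow_add]
      congr 1
      omega
    rw [mul_one_div_cancel (pow_ne_zero _ hn0), mul_one, mul_comm, cutoff, hsplit, ← mul_assoc,
      div_mul_cancel₀ _ (pow_ne_zero _ hn0)]

lemma holdsWhp_isolatedFlowers_one_div_cutoff (hik : i < k) :
    HoldsWhp birthMeasure fun n t => n.choose i <
      (isolatedFlowers k i (1 / (n : ℝ) ^ (k - i)) (cutoff (k - i) n) t).card := by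
  refine holdsWhp_choose_lt_card_isolatedFlowers hik one_pos ?_ (.of_forall fun n => le_rfl) ?_
  · filter_upwards [eventually_ge_atTop 1, tendsto_fourthRootLog.eventually_ge_atTop 1] with n hn hu
    exact ⟨by positivity, div_le_div_of_nonneg_right (one_le_pow₀ hu) (by positivity)⟩
  · filter_upwards [eventually_ge_atTop 1,
      tendsto_fourthRootLog.eventually_ge_atTop (2 * (k + 1) + 1)] with n hn hu
    set u := fourthRootLog n with hu_def
    have hn0 : (n : ℝ) ≠ 0 := by positivity
    have hu1 : 1 ≤ u := by linarith [k.cast_nonneg (α := ℝ)]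
    have hdom : u ^ 3 ≤ n * Real.exp (-(2 * (k + 1) * u ^ 3)) := by
      calc u ^ 3 ≤ Real.exp (u ^ 3) := by linarith [Real.add_one_le_exp (u ^ 3)]
        _ ≤ Real.exp (u ^ 4 + -(2 * (k + 1) * u ^ 3)) :=
            Real.exp_le_exp.mpr (by nlinarith [pow_pos (one_pos.trans_le hu1) 3])
        _ = n * Real.exp (-(2 * (k + 1) * u ^ 3)) := by
            rw [Real.exp_add, hu_def, exp_fourthRootLog_pow_four hn]
    rw [one_mul, cutoff, mul_div_cancel₀ _ (pow_ne_zero _ hn0),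
      ← pow_sub_mul_pow_succ (n : ℝ) hik.le, ← mul_assoc,
      one_div_mul_cancel (pow_ne_zero _ hn0), one_mul, mul_comm (u ^ 3), pow_succ (n : ℝ) i,
      mul_assoc]
    gcongr

end Windows

/-! ### The late time -/

section LateTime

variable {k j n : ℕ}

/-- The expected number of births, by `lateTime`, that stop a given flower from being isolated: the
logarithm of `n ^ (j + 1) * √(log n)`. -/
noncomputable def lateExponent (j n : ℕ) : ℝ :=
  (j + 1) * fourthRootLog n ^ 4 + 2 * Real.log (fourthRootLog n)

lemma pow_four_le_lateExponent (hu : 1 ≤ fourthRootLog n) :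
    fourthRootLog n ^ 4 ≤ lateExponent j n := by
  have hlog := Real.log_nonneg hu
  have hj : (0 : ℝ) ≤ j * fourthRootLog n ^ 4 := by positivity
  rw [lateExponent]
  linarith

lemma lateExponent_le (hu : 1 ≤ fourthRootLog n) :
    lateExponent j n ≤ (j + 3) * fourthRootLog n ^ 4 := by
  have hlog : Real.log (fourthRootLog n) ≤ fourthRootLog n ^ 4 :=
    (Real.log_le_self (by linarith)).trans (le_self_pow₀ hu (by norm_num))
  rw [lateExponent]
  linarith

lemma exp_neg_lateExponent (hn : 1 ≤ n) (hu : 0 < fourthRootLog n) :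
    Real.exp (-lateExponent j n) = ((n : ℝ) ^ (j + 1) * fourthRootLog n ^ 2)⁻¹ := by
  have hmain : Real.exp ((j + 1) * fourthRootLog n ^ 4) = (n : ℝ) ^ (j + 1) := by
    rw [← Nat.cast_succ, Real.exp_nat_mul, exp_fourthRootLog_pow_four hn]
  have hlog : Real.exp (2 * Real.log (fourthRootLog n)) = fourthRootLog n ^ 2 := by
    rw [← Nat.cast_two, Real.exp_nat_mul, Real.exp_log hu]
  rw [Real.exp_neg, lateExponent, Real.exp_add, hmain, hlog]

/-- The time at which a given flower is isolated with probability about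
`1 / (n ^ (j + 1) * √(log n))`: whp some flowers are still isolated then, but no simplex born later
ever has an isolated flower. -/
noncomputable def lateTime (k j n : ℕ) : ℝ := lateExponent j n / flowerDegree n k j

lemma lateTime_le (hjk : j ≤ k) (hn : 4 * k + 4 ≤ n) (hu : 1 ≤ fourthRootLog n) :
    lateTime k j n ≤ (j + 3) * (4 ^ (k - j) * (k - j).factorial) *
      (fourthRootLog n ^ 4 / (n : ℝ) ^ (k - j)) := by
  have hD : (0 : ℝ) < flowerDegree n k j := by exact_mod_cast flowerDegree_pos hjk (by omega)
  have hn0 : (0 : ℝ) < n := by exact_mod_cast (by omega : 0 < n)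
  rw [lateTime, div_le_iff₀ hD, ← mul_div_assoc, div_mul_eq_mul_div, le_div_iff₀ (by positivity)]
  calc lateExponent j n * (n : ℝ) ^ (k - j)
      ≤ (j + 3) * fourthRootLog n ^ 4 *
          (4 ^ (k - j) * (k - j).factorial * flowerDegree n k j) := by
        gcongr
        · exact lateExponent_le hu
        · exact pow_le_mul_flowerDegree hjk hn
    _ = (j + 3) * (4 ^ (k - j) * (k - j).factorial) * fourthRootLog n ^ 4 * flowerDegree n k j := by
        ring

lemma tendsto_mul_lateTime {r : ℕ} (m : ℕ) (hjk : j ≤ k) (hr : r < k - j) :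
    Tendsto (fun n => fourthRootLog n ^ m * (n : ℝ) ^ r * lateTime k j n) atTop (nhds 0) := by
  have hlim := (tendsto_fourthRootLog_pow_div_pow (m + 4) (Nat.sub_pos_of_lt hr)).const_mul
    ((j + 3) * (4 ^ (k - j) * (k - j).factorial) : ℝ)
  rw [mul_zero] at hlim
  refine squeeze_zero' ?_ ?_ hlim
  · filter_upwards [tendsto_fourthRootLog.eventually_ge_atTop 1] with n hu
    have hL : 0 ≤ lateExponent j n := le_trans (by positivity) (pow_four_le_lateExponent hu)
    rw [lateTime]
    positivity
  · filter_upwards [tendsto_fourthRootLog.eventually_ge_atTop 1, eventually_ge_atTop (4 * k + 4)]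
      with n hu hn
    have hn0 : (0 : ℝ) < n := by exact_mod_cast (by omega : 0 < n)
    calc fourthRootLog n ^ m * (n : ℝ) ^ r * lateTime k j n
        ≤ fourthRootLog n ^ m * (n : ℝ) ^ r * ((j + 3) * (4 ^ (k - j) * (k - j).factorial) *
            (fourthRootLog n ^ 4 / (n : ℝ) ^ (k - j))) := by
          gcongr
          exact lateTime_le hjk hn hu
      _ = (j + 3) * (4 ^ (k - j) * (k - j).factorial) *
            (fourthRootLog n ^ (m + 4) / (n : ℝ) ^ (k - j - r)) := by
          rw [pow_add, show (n : ℝ) ^ (k - j) = n ^ (k - j - r) * n ^ r by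
            rw [← pow_add, Nat.sub_add_cancel hr.le]]
          field_simp

lemma eventually_lateTime_mem_Icc (hjk : j < k) :
    ∀ᶠ n in atTop, lateTime k j n ∈ Set.Icc (0 : ℝ) 1 := by
  have hlim := tendsto_mul_lateTime 0 hjk.le (Nat.sub_pos_of_lt hjk)
  simp only [pow_zero, one_mul] at hlim
  filter_upwards [hlim.eventually_le_const one_pos, tendsto_fourthRootLog.eventually_ge_atTop 1]
    with n hle hu
  refine ⟨div_nonneg ?_ (Nat.cast_nonneg _), hle⟩
  exact le_trans (by positivity) (pow_four_le_lateExponent hu)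

lemma eventually_cutoff_le_lateTime (hjk : j ≤ k) :
    ∀ᶠ n in atTop, cutoff (k - j) n ≤ lateTime k j n := by
  filter_upwards [tendsto_fourthRootLog.eventually_ge_atTop (k + 1), eventually_ge_atTop (k + 1)]
    with n hu hn
  have hn0 : (0 : ℝ) < n := by exact_mod_cast (by omega : 0 < n)
  have hD0 : (0 : ℝ) < flowerDegree n k j := by exact_mod_cast flowerDegree_pos hjk hn
  have hD : (flowerDegree n k j : ℝ) ≤ (k + 1) * (n : ℝ) ^ (k - j) := by
    exact_mod_cast flowerDegree_le hjk hn
  have hu0 : 0 ≤ fourthRootLog n := Real.sqrt_nonneg _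
  rw [cutoff, lateTime, div_le_div_iff₀ (by positivity) hD0]
  calc fourthRootLog n ^ 3 * flowerDegree n k j
      ≤ fourthRootLog n ^ 3 * (fourthRootLog n * (n : ℝ) ^ (k - j)) := by
        gcongr
        exact hD.trans (by gcongr)
    _ = fourthRootLog n ^ 4 * (n : ℝ) ^ (k - j) := by ring
    _ ≤ lateExponent j n * (n : ℝ) ^ (k - j) := by
        gcongr
        exact pow_four_le_lateExponent (le_trans (by linarith [k.cast_nonneg (α := ℝ)]) hu)

lemma eventually_exp_le_one_sub_lateTime_pow (hjk : j < k) :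
    ∀ᶠ n in atTop, Real.exp (-(lateExponent j n + 1)) ≤
      (1 - lateTime k j n) ^ (flowerDegree n k j - 1) := by
  have hlim := (tendsto_mul_lateTime 4 hjk.le (Nat.sub_pos_of_lt hjk)).const_mul ((j : ℝ) + 4)
  rw [mul_zero] at hlim
  filter_upwards [hlim.eventually_lt_const one_pos, eventually_lateTime_mem_Icc hjk,
    tendsto_fourthRootLog.eventually_ge_atTop 1, eventually_ge_atTop (k + 1)] with n hlt hT hu hn
  have hD : (0 : ℝ) < flowerDegree n k j := by exact_mod_cast flowerDegree_pos hjk.le hn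
  have hLT : (lateExponent j n + 1) * lateTime k j n < 1 := by
    refine lt_of_le_of_lt ?_ hlt
    rw [pow_zero, mul_one, ← mul_assoc]
    refine mul_le_mul_of_nonneg_right ?_ hT.1
    linarith [lateExponent_le (j := j) hu, one_le_pow₀ hu (n := 4)]
  have hL : 0 ≤ lateExponent j n := le_trans (by positivity) (pow_four_le_lateExponent hu)
  have hT1 : lateTime k j n < 1 := by nlinarith [hT.1]
  calc Real.exp (-(lateExponent j n + 1))
      ≤ Real.exp (-(flowerDegree n k j * (lateTime k j n / (1 - lateTime k j n)))) := by
        refine Real.exp_le_exp.mpr (neg_le_neg ?_)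
        rw [← mul_div_assoc, lateTime, mul_div_cancel₀ _ hD.ne', ← lateTime,
          div_le_iff₀ (sub_pos.mpr hT1)]
        linarith
    _ ≤ (1 - lateTime k j n) ^ flowerDegree n k j :=
        exp_neg_mul_div_one_sub_le_one_sub_pow hT1 _
    _ ≤ (1 - lateTime k j n) ^ (flowerDegree n k j - 1) :=
        pow_le_pow_of_le_one (sub_nonneg.mpr hT.2) (by linarith [hT.1]) (Nat.sub_le _ 1)

lemma holdsWhp_isolatedFlowers_cutoff_lateTime (hjk : j < k) :
    HoldsWhp birthMeasure fun n t =>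
      0 < (isolatedFlowers k j (cutoff (k - j) n) (lateTime k j n) t).card := by
  set A : ℝ := 2 ^ (k + 1) * (k + 1).factorial
  have hlower : ∀ᶠ n in atTop, Real.exp (-1) / A * fourthRootLog n ≤
      expectedFlowers k j (cutoff (k - j) n) (lateTime k j n) n := by
    filter_upwards [eventually_cutoff_mem_Ioc (Nat.sub_pos_of_lt hjk) one_pos,
      eventually_exp_le_one_sub_lateTime_pow hjk, eventually_lateTime_mem_Icc hjk,
      tendsto_fourthRootLog.eventually_gt_atTop 0, eventually_ge_atTop (2 * (k + 1))]
      with n hcut hexp hT hu hn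
    have hn0 : (0 : ℝ) < n := by exact_mod_cast (by omega : 0 < n)
    have hle := mul_le_expectedFlowers hn hcut.1.le hT.2 hexp
    rw [div_mul_eq_mul_div, div_le_iff₀ (by positivity)]
    refine le_trans (le_of_eq ?_) (hle.trans_eq (mul_comm _ _))
    rw [neg_add, Real.exp_add, exp_neg_lateExponent (by omega) hu, cutoff,
      ← pow_sub_mul_pow_succ (n : ℝ) hjk.le]
    field_simp
  have hscale := tendsto_fourthRootLog.const_mul_atTop
    (div_pos (Real.exp_pos (-1)) (by positivity : 0 < A))
  have hwhp := holdsWhp_lt_card_isolatedFlowers (w := fun _ => 0) hjk ?_ ?_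
    (tendsto_atTop_mono' _ hlower hscale) ?_
  · exact_mod_cast hwhp
  · filter_upwards [eventually_cutoff_mem_Ioc (Nat.sub_pos_of_lt hjk) one_pos,
      eventually_cutoff_le_lateTime hjk.le] with n hcut hle
    exact ⟨hcut.1, hle⟩
  · simpa only [pow_zero, one_mul] using
      tendsto_mul_lateTime 0 hjk.le (Nat.sub_lt (Nat.sub_pos_of_lt hjk) one_pos)
  · filter_upwards [hlower, hscale.eventually_ge_atTop 0] with n hlower hscale
    rw [mul_zero]
    exact hscale.trans hlower

lemma holdsWhp_not_hasLateFlower (hjk : j < k) :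
    HoldsWhp birthMeasure fun n t => ¬ HasLateFlower k j (lateTime k j n) t := by
  set A : ℝ := 2 ^ (k + 1) * (4 ^ (k - j) * (k - j).factorial)
  have hlim : Tendsto (fun n => A * (fourthRootLog n ^ 2)⁻¹) atTop (nhds 0) := by
    have hinv := ((tendsto_pow_atTop two_ne_zero).comp tendsto_fourthRootLog).inv_tendsto_atTop
    exact mul_zero A ▸ hinv.const_mul A
  refine .of_le hlim ?_
  filter_upwards [eventually_lateTime_mem_Icc hjk, eventually_ge_atTop (4 * k + 4),
    tendsto_fourthRootLog.eventually_gt_atTop 0] with n hT hn hu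
  have hn0 : (0 : ℝ) < n := by exact_mod_cast (by omega : 0 < n)
  have hD0 : (0 : ℝ) < flowerDegree n k j := by
    exact_mod_cast flowerDegree_pos hjk.le (by omega)
  have hprob : (1 - lateTime k j n) ^ flowerDegree n k j ≤
      ((n : ℝ) ^ (j + 1) * fourthRootLog n ^ 2)⁻¹ := by
    rw [← exp_neg_lateExponent (by omega) hu]
    refine (one_sub_pow_le_exp_neg_mul hT.2 _).trans_eq ?_
    rw [lateTime, mul_div_cancel₀ _ hD0.ne']
  simp only [not_not]
  refine (birthMeasure_real_hasLateFlower_le hjk.le hT).trans ?_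
  calc (n : ℝ) ^ (k + 1) * 2 ^ (k + 1) *
        ((1 - lateTime k j n) ^ flowerDegree n k j / flowerDegree n k j)
      ≤ (n : ℝ) ^ (k + 1) * 2 ^ (k + 1) *
          (((n : ℝ) ^ (j + 1) * fourthRootLog n ^ 2)⁻¹ / flowerDegree n k j) := by gcongr
    _ = 2 ^ (k + 1) * ((n : ℝ) ^ (k - j) / flowerDegree n k j) * (fourthRootLog n ^ 2)⁻¹ := by
        rw [← pow_sub_mul_pow_succ (n : ℝ) hjk.le]
        field_simp
    _ ≤ A * (fourthRootLog n ^ 2)⁻¹ := by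
        refine mul_le_mul_of_nonneg_right (mul_le_mul_of_nonneg_left ?_ (by positivity))
          (by positivity)
        exact (div_le_iff₀ hD0).mpr (pow_le_mul_flowerDegree hjk.le hn)

end LateTime

/-! ### Isolated vertices and shells at the cutoff times -/

section Cutoffs

variable {k j : ℕ}

lemma holdsWhp_isolated_vertex (k : ℕ) :
    HoldsWhp birthMeasure fun n t => ∃ v : Fin n,
      ∀ K : Finset (Fin n), K.card = k + 1 → v ∈ K → cutoff (k + 1) n < t K := by
  refine .of_le (tendsto_cutoff le_rfl) ?_
  filter_upwards [eventually_cutoff_mem_Ioc (Nat.succ_pos k) one_pos, eventually_ge_atTop 1]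
    with n hcut hn
  have hle := birthMeasure_real_exists_mem_le_le (k := k) (⟨0, hn⟩ : Fin n)
    (Set.Ioc_subset_Icc_self hcut)
  rw [mul_comm, cutoff_mul_pow (Nat.le_succ k) hn, Nat.succ_sub (le_refl k), Nat.sub_self] at hle
  refine le_trans (measureReal_mono ?_ (measure_ne_top _ _)) hle
  intro t ht
  rw [Set.mem_ofPred_eq] at ht
  push Not at ht
  exact ht ⟨0, hn⟩

lemma one_sub_cutoff_pow_choose_le {r m n : ℕ} (hn : 1 ≤ n) (hs : cutoff r n ∈ Set.Icc 0 1)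
    (hnm : n ≤ 4 * m) (hrm : 2 * r ≤ m) :
    (1 - cutoff r n) ^ m.choose r ≤
      Real.exp (-(fourthRootLog n ^ 3 / (4 ^ r * (2 ^ r * r.factorial)))) := by
  refine (one_sub_pow_le_exp_neg_mul hs.2 _).trans (Real.exp_le_exp.mpr (neg_le_neg ?_))
  have hchoose : (n : ℝ) ^ r ≤ 4 ^ r * (2 ^ r * r.factorial) * m.choose r := by
    calc (n : ℝ) ^ r ≤ (4 * m) ^ r := pow_le_pow_left₀ (Nat.cast_nonneg n) (by exact_mod_cast hnm) r
      _ = 4 ^ r * (m : ℝ) ^ r := mul_pow _ _ _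
      _ ≤ 4 ^ r * (2 ^ r * r.factorial * m.choose r) := by
          gcongr
          exact pow_le_mul_choose hrm
      _ = 4 ^ r * (2 ^ r * r.factorial) * m.choose r := by ring
  calc fourthRootLog n ^ 3 / (4 ^ r * (2 ^ r * r.factorial))
      = cutoff r n * (n : ℝ) ^ r / (4 ^ r * (2 ^ r * r.factorial)) := by
        rw [cutoff_mul_pow le_rfl hn, Nat.sub_self, cutoff, pow_zero, div_one]
    _ ≤ m.choose r * cutoff r n := by
        rw [div_le_iff₀ (by positivity), mul_comm (m.choose r : ℝ), mul_assoc]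
        exact mul_le_mul_of_nonneg_left (hchoose.trans_eq (mul_comm _ _)) hs.1

lemma holdsWhp_hasShells_cutoff (hjk : j < k) :
    HoldsWhp birthMeasure fun n t => HasShells k j (cutoff (k - j) n) t := by
  have hface : Tendsto (fun n => ((j + 1 : ℕ) : ℝ) * Real.exp
      (-(fourthRootLog n ^ 3 / (4 ^ (k - j) * (2 ^ (k - j) * (k - j).factorial))))) atTop
      (nhds 0) := by
    have harg := ((tendsto_pow_atTop three_ne_zero).comp tendsto_fourthRootLog).atTop_div_const
      (by positivity : (0 : ℝ) < 4 ^ (k - j) * (2 ^ (k - j) * (k - j).factorial))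
    exact mul_zero ((j + 1 : ℕ) : ℝ) ▸
      (Real.tendsto_exp_neg_atTop_nhds_zero.comp harg).const_mul ((j + 1 : ℕ) : ℝ)
  have hlim : Tendsto (fun n : ℕ => 8 ^ (k + 1) *
      ((n / 4 : ℝ) ^ (k + 1) * Real.exp (-(n / 4 : ℝ)))) atTop (nhds 0) :=
    mul_zero ((8 : ℝ) ^ (k + 1)) ▸ ((Real.tendsto_pow_mul_exp_neg_atTop_nhds_zero (k + 1)).comp
      (tendsto_natCast_atTop_atTop.atTop_div_const four_pos)).const_mul ((8 : ℝ) ^ (k + 1))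
  refine .of_le hlim ?_
  filter_upwards [eventually_cutoff_mem_Ioc (Nat.sub_pos_of_lt hjk) one_pos,
    hface.eventually_le_const (Real.exp_pos (-1)), eventually_ge_atTop (8 * k + 8)]
    with n hcut hface hn
  have hs := Set.Ioc_subset_Icc_self hcut
  obtain ⟨m, hmn, hnm⟩ : ∃ m, k + 1 + 2 * m ≤ n ∧ n ≤ 4 * m :=
    ⟨(n - (k + 1)) / 2, by omega, by omega⟩
  have hmissing : ((j + 1 : ℕ) : ℝ) * (1 - cutoff (k - j) n) ^ m.choose (k - j) ≤
      Real.exp (-1) := by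
    refine le_trans ?_ hface
    gcongr
    exact one_sub_cutoff_pow_choose_le (by omega) hs hnm (by omega)
  refine (birthMeasure_real_not_hasShells_le hjk.le hs hmn).trans ?_
  calc (n : ℝ) ^ (k + 1) * 2 ^ (k + 1) *
        (((j + 1 : ℕ) : ℝ) * (1 - cutoff (k - j) n) ^ m.choose (k - j)) ^ m
      ≤ (n : ℝ) ^ (k + 1) * 2 ^ (k + 1) * Real.exp (-1) ^ m := by
        have := sub_nonneg.mpr hs.2
        gcongr
    _ ≤ (n : ℝ) ^ (k + 1) * 2 ^ (k + 1) * Real.exp (-(n / 4 : ℝ)) := by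
        rw [← Real.exp_nat_mul]
        gcongr
        have : (n : ℝ) ≤ 4 * m := by exact_mod_cast hnm
        linarith
    _ = 8 ^ (k + 1) * ((n / 4 : ℝ) ^ (k + 1) * Real.exp (-(n / 4 : ℝ))) := by
        rw [← mul_pow, ← mul_assoc, ← mul_pow]
        ring_nf

end Cutoffs

/-! ### Obstructions at all times before `p_{M_j}` -/

section Obstructions

variable {k i j n : ℕ} {t : Finset (Fin n) → ℝ} {s T p : ℝ} {K C P : Finset (Fin n)}

lemma isShell_complexAt_insert {a : Fin n} (hK : K.card = k + 1) (htK : t K ≤ p) (hPK : P ⊆ K)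
    (hP : P.card = j + 1) (ha : a ∉ K)
    (hapex : ∀ x ∈ P, ∃ K', K'.card = k + 1 ∧ insert a (P.erase x) ⊆ K' ∧ t K' ≤ p) :
    IsShell (complexAt k n t p) j (insert a P) := by
  have hcard : (insert a P).card = j + 2 := by
    rw [Finset.card_insert_of_notMem fun haP => ha (hPK haP), hP]
  refine ⟨hcard, fun τ hτ hτcard => ?_⟩
  suffices ∃ K', K'.card = k + 1 ∧ t K' ≤ p ∧ τ ⊆ K' from
    Or.inr ⟨Finset.card_pos.mp (by omega), this⟩
  obtain ⟨x, hx, hxτ⟩ := Finset.exists_mem_notMem_of_card_lt_card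
    (show τ.card < (insert a P).card by omega)
  rcases Finset.mem_insert.mp hx with rfl | hxP
  · exact ⟨K, hK, htK, ((Finset.subset_insert_iff_of_notMem hxτ).mp hτ).trans hPK⟩
  · obtain ⟨K', hK', hsub, htK'⟩ := hapex x hxP
    have hax : a ≠ x := fun hax => ha (hax ▸ hPK hxP)
    rw [← Finset.erase_insert_of_ne hax] at hsub
    exact ⟨K', hK', htK', (Finset.subset_erase.mpr ⟨hτ, hxτ⟩).trans hsub⟩

lemma HasShells.not_cohomConnected_complexAt (hshells : HasShells k j s t) (hsp : s ≤ p)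
    (hj : 1 ≤ j) (hjk : j < k) (hC : C.card = j)
    (hKC : IsIsolatedFlower (complexAt k n t p) k K C) :
    ¬ CohomConnected (complexAt k n t p) j := by
  have hG := isPureComplex_complexAt k n t p
  obtain ⟨hKG, hK⟩ := hKC.isSimplex
  have htK : t K ≤ p := ((isSimplex_complexAt_iff (by omega)).mp hKC.isSimplex).2
  obtain ⟨w, hw⟩ : (K \ C).Nonempty := by
    rw [← Finset.card_pos, Finset.card_sdiff_of_subset hKC.subset]
    omega
  obtain ⟨hwK, hwC⟩ := Finset.mem_sdiff.mp hw
  have hPK : insert w C ⊆ K := Finset.insert_subset hwK hKC.subset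
  have hP : (insert w C).card = j + 1 := by rw [Finset.card_insert_of_notMem hwC, hC]
  obtain ⟨a, ha, hapex⟩ := hshells K (insert w C) hK hPK hP
  have hCG : C ∈ complexAt k n t p :=
    hG.down K hKG C hKC.subset (Finset.card_pos.mp (by omega))
  refine not_cohomConnected_of_isMjStar (K := K) (C := C) (w := w) (a := a) hG hj
    ⟨⟨hKC.isSimplex, hCG, hC, hKC.subset, hKC.eq_of_petal_subset⟩, hw, ha, ?_⟩
  refine isShell_complexAt_insert hK htK hPK hP ha fun x hx => ?_
  obtain ⟨K', hK', hsub, htK'⟩ := hapex x hx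
  exact ⟨K', hK', hsub, htK'.trans hsp⟩

lemma not_cohomConnected_complexAt_of_le_cutoff (hn : 2 ≤ n)
    (hvertex : ∃ v : Fin n, ∀ K, K.card = k + 1 → v ∈ K → cutoff (k + 1) n < t K)
    (hbefore : ∀ i ∈ Finset.range (j + 1), n.choose i <
      (isolatedFlowers k i (cutoff (k - i + 1) n) (1 / (n : ℝ) ^ (k - i)) t).card)
    (hafter : ∀ i ∈ Finset.range (j + 1), n.choose i <
      (isolatedFlowers k i (1 / (n : ℝ) ^ (k - i)) (cutoff (k - i) n) t).card)
    (hjk : j < k) (hi : i ≤ j + 1) (hp : p ≤ cutoff (k + 1 - i) n) :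
    ¬ CohomConnected (complexAt k n t p) j := by
  induction i with
  | zero =>
    obtain ⟨v, hv⟩ := hvertex
    exact not_cohomConnected_complexAt_of_isolated_vertex hn fun K hK hvK =>
      hp.trans_lt (hv K hK hvK)
  | succ i ih =>
    have hij : i ≤ j := Nat.le_of_succ_le_succ hi
    have hik : i < k := hij.trans_lt hjk
    have hmem : i ∈ Finset.range (j + 1) := Finset.mem_range.mpr hi
    rw [Nat.add_sub_add_right] at hp
    rcases le_total p (cutoff (k + 1 - i) n) with hearly | hlate
    · exact ih (by omega) hearly
    rw [Nat.sub_add_comm hik.le] at hlate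
    rcases le_total p (1 / (n : ℝ) ^ (k - i)) with hmid | hmid
    · exact not_cohomConnected_complexAt_of_isolatedFlowers hij hik (hbefore i hmem) hlate hmid
    · exact not_cohomConnected_complexAt_of_isolatedFlowers hij hik (hafter i hmem) hmid hp

lemma exists_isIsolatedFlower_of_lt_pMj (hT : 0 ≤ T) (hTp : T ≤ p) (hp : p < pMj k j n t)
    (hjk : j < k) (hlate : ¬ HasLateFlower k j T t) :
    ∃ K C, C.card = j ∧ IsIsolatedFlower (complexAt k n t p) k K C := by
  have hne : {p : ℝ | p ∈ Set.Icc (0 : ℝ) 1 ∧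
      ∃ K C J, IsMj (complexAt k n t p) k j K C J}.Nonempty := by
    by_contra hempty
    rw [pMj, Set.not_nonempty_iff_eq_empty.mp hempty, Real.sSup_empty] at hp
    linarith
  obtain ⟨q, ⟨-, K, C, J, ⟨hKG, -, hC, hCK, hpetal⟩, -⟩, hpq⟩ := exists_lt_of_lt_csSup hne hp
  have hK := hKG.2
  have hk : 1 ≤ k := by omega
  have hisolated : t ∈ isolatedOn k q q K C :=
    (isIsolatedFlower_complexAt_iff hk hK hCK).mp ⟨hKG, hCK, hpetal⟩
  have htK : t K ≤ T := by
    by_contra! htK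
    exact hlate ⟨K, C, hK, hCK, hC, htK, fun K' hK' hne' => hisolated.1.trans_lt
      (hisolated.2 K' (Finset.mem_erase.mpr ⟨hne', hK'⟩))⟩
  exact ⟨K, C, hC, (isIsolatedFlower_complexAt_iff hk hK hCK).mpr
    ⟨htK.trans hTp, fun K' hK' => hpq.trans (hisolated.2 K' hK')⟩⟩

end Obstructions

/-- Theorem 1.5(ii): whp, for all `p < p_{M_j}` simultaneously, `G_p` is not
`F₂`-cohomologically `j`-connected. -/
theorem statement1 (k j : ℕ) (hk : 2 ≤ k) (hj : 1 ≤ j) (hjk : j < k) :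
    Tendsto (fun n : ℕ => birthMeasure n {t : Finset (Fin n) → ℝ |
      ∀ p : ℝ, p < pMj k j n t → ¬ CohomConnected (complexAt k n t p) j})
      atTop (nhds 1) := by
  have hwhp := ((((((holdsWhp_isolated_vertex k).and
    (.forall_finset (Finset.range (j + 1)) fun i hi =>
      holdsWhp_isolatedFlowers_cutoff_one_div (k := k) (i := i) (by grind))).and
    (.forall_finset (Finset.range (j + 1)) fun i hi =>
      holdsWhp_isolatedFlowers_one_div_cutoff (k := k) (i := i) (by grind))).and
    (holdsWhp_isolatedFlowers_cutoff_lateTime hjk)).and (holdsWhp_hasShells_cutoff hjk)).and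
    (holdsWhp_not_hasLateFlower hjk))
  refine (hwhp.mono ?_).tendsto_measure
  filter_upwards [eventually_ge_atTop 2, eventually_lateTime_mem_Icc hjk] with n hn hT
  rintro t ⟨⟨⟨⟨⟨hvertex, hbefore⟩, hafter⟩, hflower⟩, hshells⟩, hlate⟩ p hp
  rcases le_total p (cutoff (k - j) n) with hearly | hmid
  · exact not_cohomConnected_complexAt_of_le_cutoff hn hvertex hbefore hafter hjk le_rfl
      (by rwa [Nat.add_sub_add_right])
  obtain ⟨K, C, hC, hKC⟩ : ∃ K C, C.card = j ∧ IsIsolatedFlower (complexAt k n t p) k K C := by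
    rcases le_total p (lateTime k j n) with hle | hge
    · obtain ⟨K, hK⟩ := Finset.card_pos.mp hflower
      have hKcard := (mem_isolatedFlowers.mp hK).1
      exact ⟨K, centre j K, card_centre (by omega),
        isIsolatedFlower_of_mem_isolatedFlowers hjk hmid hle hK⟩
    · exact exists_isIsolatedFlower_of_lt_pMj hT.1 hge hp hjk hlate
  exact hshells.not_cohomConnected_complexAt hmid hj hjk hC hKC

end RSC
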